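/- arXiv:math/0703508 — 2 statements merged into one kernel-verified Lean document; each statement's English description precedes it below -/
import Mathlib

section
/- There exist a constant C and x₀ ≥ 2 such that for all x ≥ x₀, | Δ(x) − 1/√x | ≤ C/(√x·(log x)³). (That is, Δ(x) = 1/√x + O(1/(√x (log x)³)).) -/
open Filter

/-- `Δ(x) = ∑_{p ≤ x} log p / (p-1) - ∑_{n ≤ x} Λ(n)/n`. -/
noncomputable def Delta (x : ℝ) : ℝ :=
  (∑ p ∈ (Finset.range (⌊x⌋₊ + 1)).filter Nat.Prime, Real.log p / ((p : ℝ) - 1)) -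
    ∑ n ∈ Finset.Icc 1 ⌊x⌋₊, ArithmeticFunction.vonMangoldt n / n

/-!
Since `∑_{k ≥ 1} log p / p ^ k = log p / (p - 1)`, only the prime powers beyond `x` contribute
to `Δ(x)`: up to a power saving, `Δ(x)` is the sum of `log p / p ^ 2` over `√x < p ≤ x`, hence of
`Λ(n) / n ^ 2` over `√x < n ≤ x`. Replacing `Λ(n)` by `1` gives `1 / √x`, and by Abel summation
the error is governed by a prime number theorem that saves an arbitrary power of the logarithm.

For the latter it suffices that every derivative of `F = -ζ' / ζ - ζ` is `O(|t| ^ r)` up to the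
line `Re s = 1`, with some `r < 1`. Near that line `ζ(s) = O(|t| ^ θ)` for every `θ > 0`, so the
inequality `|ζ(σ) ^ 3 ζ(σ + it) ^ 4 ζ(σ + 2it)| ≥ 1` bounds `ζ` below by a small negative power
of `|t|`, slightly to the left of the line too, and Cauchy's estimates apply. Mellin inversion
of the kernel `(1 - t)₊` converts the bound on the `k`-th derivative of `F` into
`∑_{n ≤ N} (Λ(n) - 1) (log n) ^ k (N - n) = O(N ^ 2)`. There is no saving in this bound, but
taking `k = 2A` and desmoothing over an interval of length `N / (log N) ^ A` gains the factor
`(log N) ^ A`.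
-/

section PoleRemoved

/-- The entire function `(s - 1) ζ(s)`, with its value `1` at the pole filled in by hand. -/
noncomputable def zetaSubOneMul : ℂ → ℂ :=
  Function.update (fun s ↦ (s - 1) * riemannZeta s) 1 1

lemma zetaSubOneMul_one : zetaSubOneMul 1 = 1 := by simp [zetaSubOneMul]

lemma zetaSubOneMul_of_ne {s : ℂ} (hs : s ≠ 1) :
    zetaSubOneMul s = (s - 1) * riemannZeta s := by
  simp [zetaSubOneMul, hs]

lemma differentiable_zetaSubOneMul : Differentiable ℂ zetaSubOneMul := by
  rw [← differentiableOn_univ, ←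
    Complex.differentiableOn_compl_singleton_and_continuousAt_iff (c := 1) univ_mem]
  refine ⟨DifferentiableOn.congr (f := fun s ↦ (s - 1) * riemannZeta s) (fun s hs ↦ ?_)
    fun s hs ↦ zetaSubOneMul_of_ne hs.2, ?_⟩
  · exact (DifferentiableAt.mul (by fun_prop)
      (differentiableAt_riemannZeta hs.2)).differentiableWithinAt
  · rw [zetaSubOneMul, continuousAt_update_same]
    exact riemannZeta_residue_one

lemma zetaSubOneMul_ne_zero {s : ℂ} (hs : 1 ≤ s.re) : zetaSubOneMul s ≠ 0 := by
  rcases ne_or_eq s 1 with h | rfl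
  · rw [zetaSubOneMul_of_ne h]
    exact mul_ne_zero (sub_ne_zero.mpr h) (riemannZeta_ne_zero_of_one_le_re hs)
  · simp [zetaSubOneMul_one]

/-- `(s - 1)` times the difference between `(n + 1) ^ (-s)` and `∫ u in n+1..n+2, u ^ (-s)`: the
`n`-th term of the series which continues `(s - 1) ζ(s) - 1` to the half-plane `0 < Re s`. -/
noncomputable def zetaRemainderTerm (n : ℕ) (s : ℂ) : ℂ :=
  (s - 1) * ((n + 1 : ℝ) : ℂ) ^ (-s) + ((n + 2 : ℝ) : ℂ) ^ (1 - s) - ((n + 1 : ℝ) : ℂ) ^ (1 - s)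

lemma differentiable_zetaRemainderTerm (n : ℕ) : Differentiable ℂ (zetaRemainderTerm n) := by
  have h1 : ((n + 1 : ℝ) : ℂ) ≠ 0 := by exact_mod_cast (by positivity : (n + 1 : ℝ) ≠ 0)
  have h2 : ((n + 2 : ℝ) : ℂ) ≠ 0 := by exact_mod_cast (by positivity : (n + 2 : ℝ) ≠ 0)
  intro s
  unfold zetaRemainderTerm
  refine ((DifferentiableAt.mul (by fun_prop) ?_).add ?_).sub ?_ <;>
  exact DifferentiableAt.const_cpow (by fun_prop) (Or.inl (by assumption))

lemma norm_cpow_neg_sub_cpow_neg_le_norm_mul_rpow {m u : ℝ} (hm : 0 < m)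
    (hu : u ∈ Set.Icc m (m + 1)) {s : ℂ} (hs : 0 < s.re) :
    ‖(u : ℂ) ^ (-s) - (m : ℂ) ^ (-s)‖ ≤ ‖s‖ * m ^ (-s.re - 1) := by
  have hs0 : -s ≠ 0 := fun h ↦ by simp [neg_eq_zero.mp h] at hs
  have := norm_image_sub_le_of_norm_deriv_le_segment' (a := m) (b := m + 1)
    (f := fun v : ℝ ↦ (v : ℂ) ^ (-s)) (f' := fun v : ℝ ↦ -s * (v : ℂ) ^ (-s - 1))
    (C := ‖s‖ * m ^ (-s.re - 1))
    (fun v hv ↦ (hasDerivAt_ofReal_cpow_const (hm.trans_le hv.1).ne' hs0).hasDerivWithinAt)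
    (fun v hv ↦ by
      rw [norm_mul, norm_neg, Complex.norm_cpow_eq_rpow_re_of_pos (hm.trans_le hv.1)]
      gcongr
      simp only [Complex.sub_re, Complex.neg_re, Complex.one_re]
      exact Real.rpow_le_rpow_of_nonpos hm hv.1 (by linarith)) u hu
  exact this.trans (mul_le_of_le_one_right (by positivity) (by linarith [hu.2]))

lemma le_rpow_mul_rpow_one_sub {a b c θ : ℝ} (ha : 0 ≤ a) (hab : a ≤ b) (hac : a ≤ c)
    (hθ : θ ∈ Set.Icc (0 : ℝ) 1) : a ≤ b ^ θ * c ^ (1 - θ) := by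
  have hθ' : 0 ≤ 1 - θ := by linarith [hθ.2]
  calc a = a ^ θ * a ^ (1 - θ) := by rw [← Real.rpow_add' ha (by simp)]; simp
    _ ≤ b ^ θ * c ^ (1 - θ) := by
      gcongr
      · exact Real.rpow_nonneg (ha.trans hab) θ
      · exact hθ.1

-- Interpolates between the mean value bound and the trivial one: for small `θ` the dependence on
-- `s` is as weak as we please.
lemma norm_cpow_neg_sub_cpow_neg_le {m u θ : ℝ} (hm : 0 < m) (hu : u ∈ Set.Icc m (m + 1))
    (hθ : θ ∈ Set.Icc (0 : ℝ) 1) {s : ℂ} (hs : 0 < s.re) :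
    ‖(u : ℂ) ^ (-s) - (m : ℂ) ^ (-s)‖ ≤ 2 * ‖s‖ ^ θ * m ^ (-s.re - θ) := by
  have hu0 : 0 < u := hm.trans_le hu.1
  have trivial_bound : ‖(u : ℂ) ^ (-s) - (m : ℂ) ^ (-s)‖ ≤ 2 * m ^ (-s.re) := by
    refine (norm_sub_le _ _).trans ?_
    rw [Complex.norm_cpow_eq_rpow_re_of_pos hm, Complex.norm_cpow_eq_rpow_re_of_pos hu0,
      Complex.neg_re]
    linarith [Real.rpow_le_rpow_of_nonpos hm hu.1 (by linarith : -s.re ≤ 0)]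
  have two_rpow_le : (2 : ℝ) ^ (1 - θ) ≤ 2 := by
    simpa using Real.rpow_le_rpow_of_exponent_le one_le_two (by linarith [hθ.1] : 1 - θ ≤ 1)
  calc ‖(u : ℂ) ^ (-s) - (m : ℂ) ^ (-s)‖
      ≤ (‖s‖ * m ^ (-s.re - 1)) ^ θ * (2 * m ^ (-s.re)) ^ (1 - θ) :=
        le_rpow_mul_rpow_one_sub (norm_nonneg _)
          (norm_cpow_neg_sub_cpow_neg_le_norm_mul_rpow hm hu hs) trivial_bound hθ
    _ = 2 ^ (1 - θ) * ‖s‖ ^ θ * (m ^ ((-s.re - 1) * θ) * m ^ (-s.re * (1 - θ))) := by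
        rw [Real.mul_rpow (by positivity) (by positivity),
          Real.mul_rpow (by positivity) (by positivity), ← Real.rpow_mul hm.le,
          ← Real.rpow_mul hm.le]
        ring
    _ = 2 ^ (1 - θ) * ‖s‖ ^ θ * m ^ (-s.re - θ) := by rw [← Real.rpow_add hm]; ring_nf
    _ ≤ 2 * ‖s‖ ^ θ * m ^ (-s.re - θ) := by gcongr

lemma norm_zetaRemainderTerm_le (n : ℕ) {θ : ℝ} (hθ : θ ∈ Set.Icc (0 : ℝ) 1) {s : ℂ}
    (hs : 0 < s.re) :
    ‖zetaRemainderTerm n s‖ ≤ ‖s - 1‖ * (2 * ‖s‖ ^ θ * (n + 1 : ℝ) ^ (-s.re - θ)) := by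
  rcases eq_or_ne s 1 with rfl | h1
  · simp [zetaRemainderTerm]
  have hm : (0 : ℝ) < n + 1 := by positivity
  have := norm_image_sub_le_of_norm_deriv_le_segment' (a := (n + 1 : ℝ)) (b := n + 2)
      (f := fun v : ℝ ↦ (v : ℂ) ^ (1 - s) - (v : ℂ) * ((1 - s) * ((n + 1 : ℝ) : ℂ) ^ (-s)))
      (f' := fun v : ℝ ↦ (1 - s) * (v : ℂ) ^ (1 - s - 1)
        - 1 * ((1 - s) * ((n + 1 : ℝ) : ℂ) ^ (-s)))
      (C := ‖s - 1‖ * (2 * ‖s‖ ^ θ * (n + 1 : ℝ) ^ (-s.re - θ)))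
      (fun v hv ↦ ((hasDerivAt_ofReal_cpow_const (hm.trans_le hv.1).ne'
        (sub_ne_zero.mpr h1.symm)).sub
          (Complex.ofRealCLM.hasDerivAt.mul_const _)).hasDerivWithinAt)
      (fun v hv ↦ by
        rw [one_mul, ← mul_sub, norm_mul, norm_sub_rev 1 s, sub_sub_cancel_left]
        gcongr
        exact norm_cpow_neg_sub_cpow_neg_le hm ⟨hv.1, by linarith [hv.2]⟩ hθ hs)
      (n + 2) (by constructor <;> linarith)
  convert this using 1
  · congr 1
    simp only [zetaRemainderTerm]
    push_cast
    ring
  · ring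

lemma summable_nat_add_one_rpow {a : ℝ} (ha : a < -1) :
    Summable fun n : ℕ ↦ (n + 1 : ℝ) ^ a := by
  simpa using (summable_nat_add_iff 1).mpr (Real.summable_nat_rpow.mpr ha)

lemma hasSum_zetaRemainderTerm_of_one_lt_re {s : ℂ} (hs : 1 < s.re) :
    HasSum (fun n ↦ zetaRemainderTerm n s) (zetaSubOneMul s - 1) := by
  have hs1 : s ≠ 1 := fun h ↦ by simp [h] at hs
  have hsum : Summable (fun n ↦ zetaRemainderTerm n s) :=
    .of_norm_bounded (g := fun n : ℕ ↦ ‖s - 1‖ * (2 * ‖s‖ ^ (0 : ℝ) * (n + 1 : ℝ) ^ (-s.re - 0)))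
      (((summable_nat_add_one_rpow (by linarith)).mul_left _).mul_left _)
      (fun n ↦ norm_zetaRemainderTerm_le n (by simp) (by linarith))
  have tendsto_zeta : Tendsto (fun N : ℕ ↦ ∑ n ∈ Finset.range N, 1 / ((n : ℂ) + 1) ^ s) atTop
      (nhds (riemannZeta s)) := by
    rw [zeta_eq_tsum_one_div_nat_add_one_cpow hs]
    refine (Summable.hasSum ?_).tendsto_sum_nat
    simpa using (summable_nat_add_iff 1).mpr (Complex.summable_one_div_nat_cpow.mpr hs)
  have tendsto_boundary : Tendsto (fun N : ℕ ↦ ((N + 1 : ℝ) : ℂ) ^ (1 - s)) atTop (nhds 0) := by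
    rw [tendsto_zero_iff_norm_tendsto_zero]
    refine ((tendsto_rpow_neg_atTop (sub_pos.mpr hs)).comp
      (tendsto_atTop_add_const_right _ 1 tendsto_natCast_atTop_atTop)).congr fun N ↦ ?_
    rw [Complex.norm_cpow_eq_rpow_re_of_pos (by positivity)]
    simp
  have partial_sum (N : ℕ) : (s - 1) * ∑ n ∈ Finset.range N, 1 / ((n : ℂ) + 1) ^ s
      + ((N + 1 : ℝ) : ℂ) ^ (1 - s) - 1 = ∑ n ∈ Finset.range N, zetaRemainderTerm n s := by
    induction N with
    | zero => simp
    | succ N ih =>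
      rw [Finset.sum_range_succ, Finset.sum_range_succ, ← ih]
      simp only [zetaRemainderTerm, Complex.cpow_neg]
      push_cast
      rw [add_assoc (N : ℂ) 1 1, one_add_one_eq_two]
      ring
  rw [hsum.hasSum_iff_tendsto_nat, zetaSubOneMul_of_ne hs1]
  simpa using (((tendsto_zeta.const_mul (s - 1)).add tendsto_boundary).sub_const 1).congr
    partial_sum

lemma hasSum_zetaRemainderTerm {s : ℂ} (hs : 0 < s.re) :
    HasSum (fun n ↦ zetaRemainderTerm n s) (zetaSubOneMul s - 1) := by
  set σ : ℝ := min s.re 1 / 2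
  have hσ : 0 < σ := by positivity
  have hσs : σ < s.re := (half_lt_self (by positivity)).trans_le (min_le_left _ _)
  have hσ1 : σ < 1 := (half_lt_self (by positivity)).trans_le (min_le_right _ _)
  set R : ℝ := ‖s‖ + 3
  set V : Set ℂ := {z | σ < z.re} ∩ Metric.ball 0 R
  have hVo : IsOpen V := (isOpen_lt continuous_const Complex.continuous_re).inter Metric.isOpen_ball
  have hVc : IsPreconnected V :=
    ((convex_halfSpace_re_gt _).inter (convex_ball _ _)).isPreconnected
  set u : ℕ → ℝ := fun n ↦ (R + 1) * (2 * R ^ (1 : ℝ) * (n + 1 : ℝ) ^ (-σ - 1))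
  have hu : Summable u := ((summable_nat_add_one_rpow (by linarith)).mul_left _).mul_left _
  have hle : ∀ n, ∀ z ∈ V, ‖zetaRemainderTerm n z‖ ≤ u n := by
    rintro n z ⟨hz, hzR⟩
    rw [mem_ball_zero_iff] at hzR
    refine (norm_zetaRemainderTerm_le n (θ := 1) (by simp) (hσ.trans hz)).trans ?_
    have : ‖z - 1‖ ≤ R + 1 := (norm_sub_le _ _).trans (by simp [hzR.le])
    have : (1 : ℝ) ≤ n + 1 := by simp
    have : σ ≤ z.re := le_of_lt hz
    simp only [u]
    gcongr
  have hd : DifferentiableOn ℂ (fun z ↦ ∑' n, zetaRemainderTerm n z) V :=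
    Complex.differentiableOn_tsum_of_summable_norm hu
      (fun n ↦ (differentiable_zetaRemainderTerm n).differentiableOn) hVo hle
  have h2 : (2 : ℂ) ∈ V :=
    ⟨by simpa using (by linarith : σ < 2),
      by simpa [R] using (by linarith [norm_nonneg s] : 2 < ‖s‖ + 3)⟩
  have hsV : s ∈ V := ⟨hσs, by simp [R]⟩
  have tsum_eq := (hd.analyticOnNhd hVo).eqOn_of_preconnected_of_eventuallyEq
    ((differentiable_zetaSubOneMul.sub_const 1).differentiableOn.analyticOnNhd hVo) hVc h2
    (by filter_upwards [(isOpen_lt continuous_const Complex.continuous_re).mem_nhds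
          (show (1 : ℝ) < (2 : ℂ).re by norm_num)] with z hz
        exact (hasSum_zetaRemainderTerm_of_one_lt_re hz).tsum_eq) hsV
  exact (Summable.of_norm_bounded hu fun n ↦ hle n s hsV).hasSum_iff.mpr tsum_eq

lemma exists_norm_zetaSubOneMul_sub_one_le {θ : ℝ} (hθ : θ ∈ Set.Ioc (0 : ℝ) 1) :
    ∃ C : ℝ, 0 < C ∧ ∀ s : ℂ, 1 - θ / 2 < s.re →
      ‖zetaSubOneMul s - 1‖ ≤ C * (‖s - 1‖ * ‖s‖ ^ θ) := by
  obtain ⟨hθ0, hθ1⟩ := hθ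
  have hsum := summable_nat_add_one_rpow (a := -(1 + θ / 2)) (by linarith)
  refine ⟨2 * ∑' n : ℕ, (n + 1 : ℝ) ^ (-(1 + θ / 2)), ?_, fun s hs ↦ ?_⟩
  · have := hsum.tsum_pos (fun n ↦ by positivity) 0 (by norm_num)
    positivity
  · have hs0 : 0 < s.re := by linarith
    rw [← (hasSum_zetaRemainderTerm hs0).tsum_eq]
    refine (tsum_of_norm_bounded (hsum.hasSum.mul_left (‖s - 1‖ * (2 * ‖s‖ ^ θ)))
      fun n ↦ (norm_zetaRemainderTerm_le n ⟨hθ0.le, hθ1⟩ hs0).trans ?_).trans_eq (by ring)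
    have : (1 : ℝ) ≤ n + 1 := by simp
    rw [mul_assoc ‖s - 1‖]
    gcongr
    linarith

end PoleRemoved

section ZetaBounds

lemma rpow_le_mul_rpow_of_le_mul {a b c θ : ℝ} (ha : 0 ≤ a) (hb : 0 ≤ b) (hc : 1 ≤ c)
    (hθ : θ ∈ Set.Icc (0 : ℝ) 1) (h : a ≤ c * b) : a ^ θ ≤ c * b ^ θ := by
  have hc0 : 0 ≤ c := zero_le_one.trans hc
  calc a ^ θ ≤ (c * b) ^ θ := Real.rpow_le_rpow ha h hθ.1
    _ = c ^ θ * b ^ θ := Real.mul_rpow hc0 hb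
    _ ≤ c * b ^ θ := by
      gcongr
      simpa using Real.rpow_le_rpow_of_exponent_le hc hθ.2

lemma half_le_rpow {a θ : ℝ} (ha : 1 / 2 ≤ a) (hθ : θ ∈ Set.Icc (0 : ℝ) 1) : 1 / 2 ≤ a ^ θ := by
  have := rpow_le_mul_rpow_of_le_mul (a := 1) zero_le_one (b := a) (by linarith) one_le_two hθ
    (by linarith)
  rw [Real.one_rpow] at this
  linarith

lemma div_rpow_pow_five_le {a δ θ : ℝ} (ha : 1 / 2 ≤ a) (hθ : θ ∈ Set.Icc (0 : ℝ) 1)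
    (hδ : δ ≤ θ / 128) : δ / (a ^ θ) ^ 5 ≤ θ / 4 := by
  have pow_ge : (1 / 2) ^ 5 ≤ (a ^ θ) ^ 5 := by
    gcongr
    exact half_le_rpow ha hθ
  rw [div_le_iff₀ (by linarith)]
  nlinarith [hθ.1]

lemma abs_re_im_of_mem_closedBall {s z : ℂ} {r : ℝ} (hz : z ∈ Metric.closedBall s r) :
    |z.re - s.re| ≤ r ∧ |s.im| - r ≤ |z.im| ∧ |z.im| ≤ |s.im| + r := by
  rw [mem_closedBall_iff_norm] at hz
  have him : |z.im - s.im| ≤ r := by simpa using (Complex.abs_im_le_norm (z - s)).trans hz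
  have h1 := abs_sub_abs_le_abs_sub s.im z.im
  have h2 := abs_sub_abs_le_abs_sub z.im s.im
  rw [abs_sub_comm s.im] at h1
  exact ⟨by simpa using (Complex.abs_re_le_norm (z - s)).trans hz, by linarith, by linarith⟩

lemma ne_one_of_abs_im_pos {s : ℂ} (hs : 0 < |s.im|) : s ≠ 1 := by
  rintro rfl
  simp at hs

lemma exists_norm_riemannZeta_one_add_le :
    ∃ C : ℝ, 0 < C ∧ ∀ x : ℝ, 0 < x → x ≤ 2 → ‖riemannZeta (1 + x)‖ ≤ C / x := by
  obtain ⟨C, hC, h⟩ := exists_norm_zetaSubOneMul_sub_one_le (θ := 1) (by simp)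
  refine ⟨1 + C * (2 * 3), by positivity, fun x hx hx2 ↦ ?_⟩
  have hne : (1 + x : ℂ) ≠ 1 := by simpa using hx.ne'
  have h1 := h (1 + x) (by simpa using (by linarith : 1 - 1 / 2 < 1 + x))
  rw [zetaSubOneMul_of_ne hne, add_sub_cancel_left, Complex.norm_of_nonneg hx.le,
    Real.rpow_one] at h1
  have h3 : ‖(1 + x : ℂ)‖ ≤ 3 := by
    refine (norm_add_le _ _).trans ?_
    rw [norm_one, Complex.norm_of_nonneg hx.le]
    linarith
  rw [le_div_iff₀ hx]
  calc ‖riemannZeta (1 + x)‖ * x = ‖(x : ℂ) * riemannZeta (1 + x)‖ := by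
        rw [norm_mul, Complex.norm_of_nonneg hx.le, mul_comm]
    _ ≤ ‖(x : ℂ) * riemannZeta (1 + x) - 1‖ + ‖(1 : ℂ)‖ := by
        simpa using norm_add_le ((x : ℂ) * riemannZeta (1 + x) - 1) 1
    _ ≤ C * (x * ‖(1 + x : ℂ)‖) + 1 := by rw [norm_one]; gcongr
    _ ≤ C * (2 * 3) + 1 := by gcongr
    _ = 1 + C * (2 * 3) := add_comm _ _

variable {θ : ℝ}

lemma exists_norm_riemannZeta_le (hθ : θ ∈ Set.Ioc (0 : ℝ) 1) :
    ∃ C : ℝ, 0 < C ∧ ∀ s : ℂ, 1 - θ / 2 < s.re → s.re ≤ 4 → 1 / 2 ≤ |s.im| →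
      ‖riemannZeta s‖ ≤ C * |s.im| ^ θ := by
  obtain ⟨C, hC, h⟩ := exists_norm_zetaSubOneMul_sub_one_le hθ
  replace hθ := Set.Ioc_subset_Icc_self hθ
  refine ⟨4 + 9 * C, by positivity, fun s hs hs4 him ↦ ?_⟩
  have hne : s ≠ 1 := ne_one_of_abs_im_pos (by linarith)
  have hd : 1 / 2 ≤ ‖s - 1‖ := him.trans (by simpa using Complex.abs_im_le_norm (s - 1))
  have hu : 1 / 2 ≤ |s.im| ^ θ := half_le_rpow him hθ
  have hnorm : ‖s‖ ^ θ ≤ 9 * |s.im| ^ θ := by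
    refine rpow_le_mul_rpow_of_le_mul (norm_nonneg s) (abs_nonneg _) (by norm_num) hθ ?_
    refine (Complex.norm_le_abs_re_add_abs_im s).trans ?_
    rw [abs_of_pos (by linarith [hθ.2] : 0 < s.re)]
    linarith
  refine le_of_mul_le_mul_left ?_ (show 0 < ‖s - 1‖ by linarith)
  calc ‖s - 1‖ * ‖riemannZeta s‖ ≤ ‖(s - 1) * riemannZeta s - 1‖ + ‖(1 : ℂ)‖ := by
        rw [← norm_mul]
        simpa using norm_add_le ((s - 1) * riemannZeta s - 1) 1
    _ ≤ C * (‖s - 1‖ * ‖s‖ ^ θ) + 1 := by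
        rw [norm_one, ← zetaSubOneMul_of_ne hne]
        gcongr
        exact h s hs
    _ ≤ C * (‖s - 1‖ * (9 * |s.im| ^ θ)) + 4 * (‖s - 1‖ * |s.im| ^ θ) := by
        gcongr
        linarith [mul_le_mul hd hu (by norm_num) (norm_nonneg _)]
    _ = ‖s - 1‖ * ((4 + 9 * C) * |s.im| ^ θ) := by ring

lemma exists_norm_deriv_riemannZeta_le (hθ : θ ∈ Set.Ioc (0 : ℝ) 1) :
    ∃ C : ℝ, 0 < C ∧ ∀ s : ℂ, 1 - θ / 4 ≤ s.re → s.re ≤ 3 → 3 / 4 ≤ |s.im| →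
      ‖deriv riemannZeta s‖ ≤ C * |s.im| ^ θ := by
  obtain ⟨C, hC, h⟩ := exists_norm_riemannZeta_le hθ
  obtain ⟨hθ0, hθ1⟩ := hθ
  have hr : 0 < θ / 8 := by positivity
  refine ⟨C * 2 / (θ / 8), by positivity, fun s hs hs3 him ↦ ?_⟩
  have him_ball : ∀ z ∈ Metric.closedBall s (θ / 8), 1 / 2 ≤ |z.im| ∧ |z.im| ≤ 2 * |s.im| := by
    intro z hz
    have := (abs_re_im_of_mem_closedBall hz).2
    constructor <;> linarith
  have cauchy := Complex.norm_deriv_le_of_forall_mem_sphere_norm_le (c := s)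
    (C := C * (2 * |s.im| ^ θ)) hr (f := riemannZeta) ?_ ?_
  · exact cauchy.trans_eq (by ring)
  · refine DifferentiableOn.diffContOnCl_ball (U := Metric.closedBall s (θ / 8)) (fun z hz ↦ ?_)
      subset_rfl
    exact (differentiableAt_riemannZeta
      (ne_one_of_abs_im_pos (by linarith [him_ball z hz]))).differentiableWithinAt
  · intro z hz
    have hz' := Metric.sphere_subset_closedBall hz
    have hre := abs_le.mp (abs_re_im_of_mem_closedBall hz').1
    refine (h z (by linarith [hre.1]) (by linarith [hre.2]) (him_ball z hz').1).trans ?_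
    gcongr
    exact rpow_le_mul_rpow_of_le_mul (abs_nonneg _) (abs_nonneg _) one_le_two ⟨hθ0.le, hθ1⟩
      (him_ball z hz').2

lemma one_le_norm_riemannZeta_product {x : ℝ} (hx : 0 < x) (y : ℝ) :
    1 ≤ ‖riemannZeta (1 + x)‖ ^ 3 * ‖riemannZeta (1 + x + Complex.I * y)‖ ^ 4 *
      ‖riemannZeta (1 + x + 2 * Complex.I * y)‖ := by
  have := DirichletCharacter.norm_LFunction_product_ge_one (N := 1) (1 : DirichletCharacter ℂ 1)
    hx y
  simpa [DirichletCharacter.LFunctionTrivChar, DirichletCharacter.LFunction_modOne_eq] using this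

lemma exists_mul_pow_le_norm_riemannZeta_pow (hθ : θ ∈ Set.Ioc (0 : ℝ) 1) :
    ∃ a : ℝ, 0 < a ∧ ∀ s : ℂ, 1 < s.re → s.re ≤ 3 → 3 / 4 ≤ |s.im| →
      a * (s.re - 1) ^ 3 ≤ ‖riemannZeta s‖ ^ 4 * |s.im| ^ θ := by
  obtain ⟨C₁, hC₁, h₁⟩ := exists_norm_riemannZeta_one_add_le
  obtain ⟨C₂, hC₂, h₂⟩ := exists_norm_riemannZeta_le hθ
  refine ⟨1 / (C₁ ^ 3 * (C₂ * 2)), by positivity, fun s hs hs3 him ↦ ?_⟩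
  set y := s.re - 1
  have hy : 0 < y := sub_pos.mpr hs
  have hs_eq : 1 + (y : ℂ) + Complex.I * s.im = s := by apply Complex.ext <;> simp [y]
  set z : ℂ := 1 + y + 2 * Complex.I * s.im
  have hz_re : z.re = s.re := by simp [z, y]
  have hz_im : |z.im| = 2 * |s.im| := by simp [z, abs_mul]
  have zeta_z_le : ‖riemannZeta z‖ ≤ C₂ * (2 * |s.im| ^ θ) := by
    refine (h₂ z (by rw [hz_re]; linarith [hθ.1]) (by linarith) (by linarith)).trans ?_
    gcongr
    exact rpow_le_mul_rpow_of_le_mul (abs_nonneg _) (abs_nonneg _) one_le_two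
      (Set.Ioc_subset_Icc_self hθ) hz_im.le
  have product_le : (1 : ℝ) ≤ (C₁ / y) ^ 3 * ‖riemannZeta s‖ ^ 4 * (C₂ * (2 * |s.im| ^ θ)) := by
    refine (one_le_norm_riemannZeta_product hy s.im).trans ?_
    rw [hs_eq]
    gcongr
    exact h₁ y hy (by linarith)
  rw [one_div_mul_eq_div, div_le_iff₀ (by positivity)]
  calc y ^ 3 = y ^ 3 * 1 := (mul_one _).symm
    _ ≤ y ^ 3 * ((C₁ / y) ^ 3 * ‖riemannZeta s‖ ^ 4 * (C₂ * (2 * |s.im| ^ θ))) := by gcongr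
    _ = ‖riemannZeta s‖ ^ 4 * |s.im| ^ θ * (C₁ ^ 3 * (C₂ * 2)) := by field_simp

lemma exists_mul_pow_le_norm_riemannZeta_mul (hθ : θ ∈ Set.Ioc (0 : ℝ) 1) :
    ∃ b : ℝ, 0 < b ∧ ∀ κ : ℝ, 0 < κ → ∀ s : ℂ, s.re ≤ 3 → 3 / 4 ≤ |s.im| →
      κ ^ 4 / (|s.im| ^ θ) ^ 5 ≤ s.re - 1 → b * κ ^ 3 ≤ ‖riemannZeta s‖ * (|s.im| ^ θ) ^ 4 := by
  obtain ⟨a, ha, h⟩ := exists_mul_pow_le_norm_riemannZeta_pow hθ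
  have hb_pow : min a 1 ^ 4 ≤ a :=
    (pow_le_of_le_one (by positivity) (min_le_right _ _) (by norm_num)).trans (min_le_left _ _)
  refine ⟨min a 1, by positivity, fun κ hκ s hs3 him hs ↦ ?_⟩
  have : 0 < |s.im| := by linarith
  set u := |s.im| ^ θ
  have hu : 0 < u := by positivity
  have hre : 0 < s.re - 1 := lt_of_lt_of_le (by positivity) hs
  have hκ_le : κ ^ 4 ≤ (s.re - 1) * u ^ 5 := by rwa [div_le_iff₀ (by positivity)] at hs
  refine le_of_pow_le_pow_left₀ (n := 4) (by norm_num) (by positivity) ?_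
  calc (min a 1 * κ ^ 3) ^ 4 = min a 1 ^ 4 * (κ ^ 4) ^ 3 := by ring
    _ ≤ a * ((s.re - 1) * u ^ 5) ^ 3 := by gcongr
    _ = a * (s.re - 1) ^ 3 * u ^ 15 := by ring
    _ ≤ ‖riemannZeta s‖ ^ 4 * u * u ^ 15 :=
        mul_le_mul_of_nonneg_right (h s (by linarith) hs3 him) (by positivity)
    _ = (‖riemannZeta s‖ * u ^ 4) ^ 4 := by ring

lemma exists_norm_riemannZeta_sub_le (hθ : θ ∈ Set.Ioc (0 : ℝ) 1) :
    ∃ C : ℝ, 0 < C ∧ ∀ s w : ℂ, s.im = w.im → 3 / 4 ≤ |s.im| →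
      s.re ∈ Set.Icc (1 - θ / 4) 3 → w.re ∈ Set.Icc (1 - θ / 4) 3 →
      ‖riemannZeta w - riemannZeta s‖ ≤ C * |s.im| ^ θ * |w.re - s.re| := by
  obtain ⟨C, hC, h⟩ := exists_norm_deriv_riemannZeta_le hθ
  refine ⟨C, hC, fun s w hsw him hs hw ↦ ?_⟩
  have hcon : Convex ℝ (Set.Icc (1 - θ / 4) 3 ×ℂ {s.im}) :=
    ((convex_Icc _ _).linear_preimage Complex.reLm).inter
      ((convex_singleton _).linear_preimage Complex.imLm)
  have hnorm : ‖w - s‖ = |w.re - s.re| := by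
    rw [Complex.norm_def, Complex.normSq_apply]
    simp [hsw, Real.sqrt_mul_self_eq_abs]
  rw [← hnorm]
  refine hcon.norm_image_sub_le_of_norm_deriv_le (fun z hz ↦ ?_) (fun z hz ↦ ?_)
    (Complex.mem_reProdIm.mpr ⟨hs, rfl⟩) (Complex.mem_reProdIm.mpr ⟨hw, hsw.symm⟩) <;>
  obtain ⟨hre, him_eq : z.im = s.im⟩ := Complex.mem_reProdIm.mp hz
  · exact differentiableAt_riemannZeta (ne_one_of_abs_im_pos (by rw [him_eq]; linarith))
  · simpa [him_eq] using h z hre.1 hre.2 (by rwa [him_eq])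

-- The point `s` is compared with the point at height `Im s` at distance `κ ^ 4 / |Im s| ^ (5 * θ)`
-- to the right of the line `Re s = 1`. There `ζ` has size at least a multiple of `κ ^ 3`, while it
-- varies by at most a multiple of `κ ^ 4` in between (both up to the same power of `|Im s|`).
lemma exists_le_norm_riemannZeta (hθ : θ ∈ Set.Ioc (0 : ℝ) 1) :
    ∃ c δ : ℝ, 0 < c ∧ δ ∈ Set.Ioc 0 (θ / 128) ∧ ∀ s : ℂ, s.re ≤ 3 → 3 / 4 ≤ |s.im| →
      1 - δ / (|s.im| ^ θ) ^ 5 ≤ s.re → c ≤ ‖riemannZeta s‖ * (|s.im| ^ θ) ^ 4 := by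
  obtain ⟨b, hb, hright⟩ := exists_mul_pow_le_norm_riemannZeta_mul hθ
  obtain ⟨C, hC, hvar⟩ := exists_norm_riemannZeta_sub_le hθ
  obtain ⟨hθ0, hθ1⟩ := hθ
  set κ : ℝ := min (θ / 4) (b / (4 * C))
  have hκ : 0 < κ := by positivity
  have hκθ : κ ≤ θ / 4 := min_le_left _ _
  have hκC : 2 * C * κ ≤ b / 2 := by
    calc 2 * C * κ ≤ 2 * C * (b / (4 * C)) := by gcongr; exact min_le_right _ _
      _ = b / 2 := by field_simp; norm_num
  have hκ4 : κ ^ 4 ≤ θ / 128 := by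
    have : κ ^ 3 ≤ (1 / 4) ^ 3 := by gcongr; linarith
    nlinarith
  refine ⟨b * κ ^ 3 / 2, κ ^ 4, by positivity, ⟨by positivity, hκ4⟩, fun s hs3 him hs ↦ ?_⟩
  set u := |s.im| ^ θ
  have hu : 0 < u := Real.rpow_pos_of_pos (by linarith) θ
  set x : ℝ := κ ^ 4 / u ^ 5
  have hx : 0 < x := by positivity
  have hxθ : x ≤ θ / 4 := div_rpow_pow_five_le (by linarith) ⟨hθ0.le, hθ1⟩ hκ4
  rcases le_or_gt x (s.re - 1) with hc | hc
  · exact (half_le_self (by positivity)).trans (hright κ hκ s hs3 him hc)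
  set w : ℂ := ⟨1 + x, s.im⟩
  have zeta_w_ge : b * κ ^ 3 ≤ ‖riemannZeta w‖ * u ^ 4 :=
    hright κ hκ w (show 1 + x ≤ 3 by linarith) him (show x ≤ 1 + x - 1 by linarith)
  have zeta_w_le : ‖riemannZeta w‖ ≤ ‖riemannZeta s‖ + C * u * (2 * x) := by
    have hdist : |w.re - s.re| ≤ 2 * x := abs_le.mpr
      ⟨show -(2 * x) ≤ 1 + x - s.re by linarith, show 1 + x - s.re ≤ 2 * x by linarith⟩
    refine (norm_le_norm_add_norm_sub' _ (riemannZeta s)).trans ?_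
    gcongr
    refine (hvar s w rfl him ⟨by linarith, hs3⟩ ⟨?_, ?_⟩).trans (by gcongr) <;>
      simp only [w] <;> linarith
  have : b * κ ^ 3 ≤ ‖riemannZeta s‖ * u ^ 4 + b / 2 * κ ^ 3 := by
    calc b * κ ^ 3 ≤ (‖riemannZeta s‖ + C * u * (2 * x)) * u ^ 4 :=
          zeta_w_ge.trans (by gcongr)
      _ = ‖riemannZeta s‖ * u ^ 4 + 2 * C * κ * κ ^ 3 := by simp only [x]; field_simp
      _ ≤ ‖riemannZeta s‖ * u ^ 4 + b / 2 * κ ^ 3 := by gcongr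
  linarith

end ZetaBounds

section LogDeriv

/-- The analytic continuation of `-ζ' / ζ - ζ`, which has a removable singularity at `1`: it is
written in terms of `(s - 1) ζ(s)`, whose slope at `1` absorbs the two poles. -/
noncomputable def negLogDerivZetaSubZeta (s : ℂ) : ℂ :=
  -deriv zetaSubOneMul s / zetaSubOneMul s - dslope zetaSubOneMul 1 s

lemma negLogDerivZetaSubZeta_eq {s : ℂ} (h1 : s ≠ 1) (h0 : riemannZeta s ≠ 0) :
    negLogDerivZetaSubZeta s = -deriv riemannZeta s / riemannZeta s - riemannZeta s := by
  have hd : deriv zetaSubOneMul s = riemannZeta s + (s - 1) * deriv riemannZeta s := by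
    have heq : zetaSubOneMul =ᶠ[nhds s] fun s ↦ (s - 1) * riemannZeta s := by
      filter_upwards [eventually_ne_nhds h1] with t ht using zetaSubOneMul_of_ne ht
    rw [heq.deriv_eq]
    have := ((hasDerivAt_id s).sub_const 1).mul (differentiableAt_riemannZeta h1).hasDerivAt
    simpa [Pi.mul_def] using this.deriv
  have h1' : s - 1 ≠ 0 := sub_ne_zero.mpr h1
  rw [negLogDerivZetaSubZeta, dslope_of_ne _ h1, slope_def_field, hd, zetaSubOneMul_of_ne h1,
    zetaSubOneMul_one]
  field_simp
  ring

lemma analyticAt_negLogDerivZetaSubZeta {s : ℂ} (h : zetaSubOneMul s ≠ 0) :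
    AnalyticAt ℂ negLogDerivZetaSubZeta s := by
  have hd : Differentiable ℂ (dslope zetaSubOneMul 1) := by
    rw [← differentiableOn_univ]
    exact (Complex.differentiableOn_dslope univ_mem).mpr
      differentiable_zetaSubOneMul.differentiableOn
  have h1 := differentiable_zetaSubOneMul.analyticAt s
  exact (h1.deriv.neg.div h1 h).sub (hd.analyticAt s)

lemma exists_analyticAt_and_norm_negLogDerivZetaSubZeta_le {θ : ℝ} (hθ : θ ∈ Set.Ioc (0 : ℝ) 1) :
    ∃ C δ : ℝ, 0 < C ∧ δ ∈ Set.Ioc (0 : ℝ) 1 ∧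
      ∀ s : ℂ, s.re ≤ 3 → 3 / 4 ≤ |s.im| → 1 - δ / (|s.im| ^ θ) ^ 5 ≤ s.re →
        AnalyticAt ℂ negLogDerivZetaSubZeta s ∧
          ‖negLogDerivZetaSubZeta s‖ ≤ C * (|s.im| ^ θ) ^ 5 := by
  obtain ⟨c, δ, hc, ⟨hδ, hδθ⟩, hlow⟩ := exists_le_norm_riemannZeta hθ
  obtain ⟨C₀, hC₀, h₀⟩ := exists_norm_riemannZeta_le hθ
  obtain ⟨C₁, hC₁, h₁⟩ := exists_norm_deriv_riemannZeta_le hθ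
  refine ⟨C₁ / c + 16 * C₀, δ, by positivity, ⟨hδ, by linarith [hθ.2]⟩,
    fun s hs3 him hs ↦ ?_⟩
  have hlow := hlow s hs3 him hs
  set u := |s.im| ^ θ
  have hu : 1 / 2 ≤ u := half_le_rpow (by linarith) (Set.Ioc_subset_Icc_self hθ)
  have hu4 : (1 / 2) ^ 4 ≤ u ^ 4 := by gcongr
  have hre : 1 - θ / 4 ≤ s.re := by
    have := div_rpow_pow_five_le (a := |s.im|) (by linarith) (Set.Ioc_subset_Icc_self hθ) hδθ
    linarith
  have h1 : s ≠ 1 := ne_one_of_abs_im_pos (by linarith)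
  have h0 : riemannZeta s ≠ 0 := by
    intro h
    rw [h, norm_zero, zero_mul] at hlow
    linarith
  have hζ : 0 < ‖riemannZeta s‖ := norm_pos_iff.mpr h0
  constructor
  · refine analyticAt_negLogDerivZetaSubZeta ?_
    rw [zetaSubOneMul_of_ne h1]
    exact mul_ne_zero (sub_ne_zero.mpr h1) h0
  have logDeriv_le : ‖-deriv riemannZeta s / riemannZeta s‖ ≤ C₁ / c * u ^ 5 := by
    rw [norm_div, norm_neg, div_le_iff₀ hζ]
    calc ‖deriv riemannZeta s‖ ≤ C₁ * u := h₁ s hre hs3 him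
      _ = C₁ / c * u * c := by field_simp
      _ ≤ C₁ / c * u * (‖riemannZeta s‖ * u ^ 4) := by gcongr
      _ = C₁ / c * u ^ 5 * ‖riemannZeta s‖ := by ring
  have zeta_le : ‖riemannZeta s‖ ≤ 16 * C₀ * u ^ 5 := by
    calc ‖riemannZeta s‖ ≤ C₀ * u :=
          h₀ s (by linarith [hθ.1]) (by linarith) (by linarith)
      _ ≤ C₀ * u * (16 * u ^ 4) := le_mul_of_one_le_right (by positivity) (by linarith)
      _ = 16 * C₀ * u ^ 5 := by ring
  rw [negLogDerivZetaSubZeta_eq h1 h0]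
  exact (norm_sub_le _ _).trans (by linarith)

lemma exists_norm_iteratedDeriv_negLogDerivZetaSubZeta_le_mul_pow {θ : ℝ}
    (hθ : θ ∈ Set.Ioc (0 : ℝ) 1) (k : ℕ) :
    ∃ K : ℝ, ∀ s : ℂ, s.re ∈ Set.Icc (1 : ℝ) 2 → 1 ≤ |s.im| →
      ‖iteratedDeriv k negLogDerivZetaSubZeta s‖ ≤ K * (|s.im| ^ θ) ^ (5 * (k + 1)) := by
  obtain ⟨C, δ, hC, ⟨hδ0, hδ1⟩, h⟩ := exists_analyticAt_and_norm_negLogDerivZetaSubZeta_le hθ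
  refine ⟨k.factorial * (C * 2 ^ 5) / (δ / 2 ^ 5) ^ k, fun s hs him ↦ ?_⟩
  set u := |s.im| ^ θ
  have hu : 1 ≤ u := Real.one_le_rpow him hθ.1.le
  set r : ℝ := δ / (2 * u) ^ 5
  have hr : 0 < r := by positivity
  have hr1 : r ≤ 1 / 4 := by
    have : 2 ^ 5 ≤ (2 * u) ^ 5 := by gcongr; linarith
    rw [div_le_iff₀ (by positivity)]
    linarith
  have ball : ∀ z ∈ Metric.closedBall s r, AnalyticAt ℂ negLogDerivZetaSubZeta z ∧
      ‖negLogDerivZetaSubZeta z‖ ≤ C * (2 * u) ^ 5 := by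
    intro z hz
    obtain ⟨hz_re, hz_im, hz_im'⟩ := abs_re_im_of_mem_closedBall hz
    rw [abs_le] at hz_re
    have hz0 : 0 < |z.im| := by linarith
    have hu_le : |z.im| ^ θ ≤ 2 * u := rpow_le_mul_rpow_of_le_mul (abs_nonneg _) (abs_nonneg _)
      one_le_two (Set.Ioc_subset_Icc_self hθ) (by linarith)
    have hr_le : r ≤ δ / (|z.im| ^ θ) ^ 5 := by simp only [r]; gcongr
    obtain ⟨hz_analytic, hz_le⟩ :=
      h z (by linarith [hs.2]) (by linarith) (by linarith [hs.1])
    exact ⟨hz_analytic, hz_le.trans (by gcongr)⟩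
  have cauchy := Complex.norm_iteratedDeriv_le_of_forall_mem_sphere_norm_le k hr
    (DifferentiableOn.diffContOnCl_ball (U := Metric.closedBall s r) (fun z hz ↦
      (ball z hz).1.differentiableAt.differentiableWithinAt) subset_rfl)
    fun z hz ↦ (ball z (Metric.sphere_subset_closedBall hz)).2
  refine cauchy.trans_eq ?_
  simp only [r, mul_pow, div_pow, pow_mul, pow_succ _ k]
  field_simp

lemma exists_norm_iteratedDeriv_negLogDerivZetaSubZeta_le (k : ℕ) {r : ℝ} (hr : 0 < r) :
    ∃ K : ℝ, 0 ≤ K ∧ ∀ s : ℂ, s.re ∈ Set.Icc (1 : ℝ) 2 →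
      ‖iteratedDeriv k negLogDerivZetaSubZeta s‖ ≤ K * (1 + |s.im|) ^ r := by
  set θ : ℝ := min 1 (r / (5 * (k + 1)))
  have hθ : θ ∈ Set.Ioc (0 : ℝ) 1 := ⟨by positivity, min_le_left _ _⟩
  have hθr : θ * (5 * (k + 1) : ℕ) ≤ r := by
    have := min_le_right 1 (r / (5 * (k + 1)))
    rw [le_div_iff₀ (by positivity)] at this
    push_cast
    exact this
  obtain ⟨K₁, h₁⟩ := exists_norm_iteratedDeriv_negLogDerivZetaSubZeta_le_mul_pow hθ k
  obtain ⟨K₂, h₂⟩ := (isCompact_Icc.reProdIm isCompact_Icc :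
      IsCompact (Set.Icc (1 : ℝ) 2 ×ℂ Set.Icc (-1 : ℝ) 1)).exists_bound_of_continuousOn
    (f := iteratedDeriv k negLogDerivZetaSubZeta) (fun z hz ↦ by
      rw [Complex.mem_reProdIm] at hz
      rw [iteratedDeriv_eq_iterate]
      exact ((analyticAt_negLogDerivZetaSubZeta
        (zetaSubOneMul_ne_zero hz.1.1)).iterated_deriv k).continuousAt.continuousWithinAt)
  refine ⟨max (max K₁ K₂) 0, le_max_right _ _, fun s hs ↦ ?_⟩
  rcases le_total 1 |s.im| with him | him
  · refine (h₁ s hs him).trans ?_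
    rw [← Real.rpow_natCast, ← Real.rpow_mul (abs_nonneg _)]
    gcongr
    · exact (le_max_left _ _).trans (le_max_left _ _)
    · exact (Real.rpow_le_rpow_of_exponent_le him hθr).trans (by gcongr; linarith)
  · refine (h₂ s (Complex.mem_reProdIm.mpr ⟨hs, abs_le.mp him⟩)).trans
      (((le_max_right K₁ K₂).trans (le_max_left _ 0)).trans ?_)
    exact le_mul_of_one_le_right (le_max_right _ _) (Real.one_le_rpow (by simp) hr.le)

end LogDeriv

section CesaroMeans

/-- The Cesàro kernel `(1 - t)₊`, complex valued for use with Mellin transforms. -/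
noncomputable def cesaroKernel (t : ℝ) : ℂ := ((max (1 - t) 0 : ℝ) : ℂ)

lemma continuous_cesaroKernel : Continuous cesaroKernel := by
  unfold cesaroKernel
  fun_prop

lemma cesaroKernel_of_one_le {t : ℝ} (ht : 1 ≤ t) : cesaroKernel t = 0 := by
  simp [cesaroKernel, ht]

lemma cesaroKernel_of_le_one {t : ℝ} (ht : t ≤ 1) : cesaroKernel t = 1 - t := by
  simp [cesaroKernel, ht]

lemma cesaroKernel_eqOn_indicator_sub_indicator : Set.EqOn cesaroKernel
    (fun t ↦ Set.indicator (Set.Ioc 0 1) (fun _ ↦ (1 : ℂ)) t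
      - Set.indicator (Set.Ioc 0 1) (fun t : ℝ ↦ (t : ℂ) ^ (1 : ℂ)) t) (Set.Ioi 0) := by
  intro t (ht : 0 < t)
  rcases le_or_gt t 1 with h | h
  · simp [cesaroKernel_of_le_one h, ht, h]
  · simp [cesaroKernel_of_one_le h.le, h.not_ge]

lemma hasMellin_cesaroKernel {s : ℂ} (hs : 0 < s.re) :
    HasMellin cesaroKernel s (1 / (s * (s + 1))) := by
  have h1 := hasMellin_one_Ioc hs
  have h2 := hasMellin_cpow_Ioc 1 (s := s) (by simpa using (by linarith : 0 < s.re + 1))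
  have h3 := hasMellin_sub h1.1 h2.1
  have congr_kernel {t : ℝ} (ht : t ∈ Set.Ioi 0) :=
    congrArg (fun z : ℂ ↦ (t : ℂ) ^ (s - 1) • z) (cesaroKernel_eqOn_indicator_sub_indicator ht)
  refine ⟨(MeasureTheory.integrableOn_congr_fun (fun t ht ↦ congr_kernel ht)
    measurableSet_Ioi).mpr h3.1, ?_⟩
  have hs0 : s ≠ 0 := by rintro rfl; simp at hs
  have hs1 : s + 1 ≠ 0 := by
    intro h
    have hre : s.re + 1 = 0 := by simpa using congrArg Complex.re h
    linarith
  calc mellin cesaroKernel s = 1 / s - 1 / (s + 1) := by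
        rw [← h1.2, ← h2.2, ← h3.2]
        exact MeasureTheory.setIntegral_congr_fun measurableSet_Ioi fun t ht ↦ congr_kernel ht
    _ = 1 / (s * (s + 1)) := by field_simp; ring

variable {σ : ℝ}

lemma one_add_im_sq_le_norm_sq {s : ℂ} (hs : 1 ≤ s.re) : 1 + s.im ^ 2 ≤ ‖s‖ ^ 2 := by
  rw [Complex.sq_norm, Complex.normSq_apply]
  nlinarith

lemma norm_one_div_mul_add_one_le (hσ : 1 ≤ σ) (y : ℝ) :
    ‖1 / (((σ : ℂ) + y * Complex.I) * ((σ : ℂ) + y * Complex.I + 1))‖ ≤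
      2 * (1 + ‖y‖) ^ (-2 : ℝ) := by
  have norm_ge : (1 + |y|) ^ 2 / 2 ≤
      ‖((σ : ℂ) + y * Complex.I) * ((σ : ℂ) + y * Complex.I + 1)‖ := by
    have h1 : 1 + y ^ 2 ≤ ‖(σ : ℂ) + y * Complex.I‖ ^ 2 := by
      simpa using one_add_im_sq_le_norm_sq (s := (σ : ℂ) + y * Complex.I) (by simpa using hσ)
    have h2 : 1 + y ^ 2 ≤ ‖(σ : ℂ) + y * Complex.I + 1‖ ^ 2 := by
      simpa using one_add_im_sq_le_norm_sq (s := (σ : ℂ) + y * Complex.I + 1)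
        (by simpa using (by linarith : 0 ≤ σ))
    have h3 : (1 + |y|) ^ 2 / 2 ≤ 1 + y ^ 2 := by
      rw [← sq_abs y]; nlinarith [sq_nonneg (1 - |y|)]
    rw [norm_mul]
    refine h3.trans (abs_le_of_sq_le_sq' ?_ (by positivity)).2
    rw [mul_pow, sq (1 + y ^ 2)]
    exact mul_le_mul h1 h2 (by positivity) (by positivity)
  rw [norm_div, norm_one, Real.rpow_neg (by positivity), Real.rpow_two, Real.norm_eq_abs]
  calc _ ≤ 1 / ((1 + |y|) ^ 2 / 2) := by gcongr
    _ = _ := by field_simp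

lemma integrable_one_add_norm_rpow {r : ℝ} (hr : 1 < r) :
    MeasureTheory.Integrable (fun y : ℝ ↦ (1 + ‖y‖) ^ (-r)) :=
  integrable_one_add_norm (by simpa using hr)

lemma integral_cpow_mul_eq_cesaroKernel {t : ℝ} (hσ : 1 ≤ σ) (ht : 0 < t) :
    ∫ y : ℝ, (t : ℂ) ^ (-((σ : ℂ) + y * Complex.I)) *
      (1 / (((σ : ℂ) + y * Complex.I) * ((σ : ℂ) + y * Complex.I + 1))) =
      2 * Real.pi * cesaroKernel t := by
  have hmellin (y : ℝ) :=
    hasMellin_cesaroKernel (s := (σ : ℂ) + y * Complex.I) (by simpa using (by linarith : 0 < σ))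
  have vertical : Complex.VerticalIntegrable (mellin cesaroKernel) σ := by
    unfold Complex.VerticalIntegrable
    simp only [(hmellin _).2]
    exact ((integrable_one_add_norm_rpow one_lt_two).const_mul 2).mono'
      (Measurable.aestronglyMeasurable (by fun_prop))
      (.of_forall fun y ↦ norm_one_div_mul_add_one_le hσ y)
  rw [← mellinInv_mellin_eq σ cesaroKernel ht (by simpa using (hmellin 0).1) vertical
    continuous_cesaroKernel.continuousAt]
  simp only [mellinInv, (hmellin _).2, Complex.real_smul, smul_eq_mul]
  have hpi : 2 * (Real.pi : ℂ) * ((1 / (2 * Real.pi) : ℝ) : ℂ) = 1 := by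
    push_cast
    field_simp
  rw [← mul_assoc, hpi, one_mul]

variable {b : ℕ → ℂ} {x : ℝ}

lemma norm_ofReal_cpow_add_mul_I (hx : 0 < x) (y : ℝ) :
    ‖(x : ℂ) ^ ((σ : ℂ) + y * Complex.I)‖ = x ^ σ := by
  rw [Complex.norm_cpow_eq_rpow_re_of_pos hx]
  simp

lemma integral_term_mul_cpow_mul (hσ : 1 ≤ σ) (hx : 0 < x) {n : ℕ} (hn : n ≠ 0) :
    ∫ y : ℝ, LSeries.term b ((σ : ℂ) + y * Complex.I) n * ((x : ℂ) ^ ((σ : ℂ) + y * Complex.I) *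
      (1 / (((σ : ℂ) + y * Complex.I) * ((σ : ℂ) + y * Complex.I + 1)))) =
      2 * Real.pi * (b n * cesaroKernel (n / x)) := by
  have hn0 : (0 : ℝ) < n := by exact_mod_cast hn.bot_lt
  rw [mul_left_comm, ← integral_cpow_mul_eq_cesaroKernel hσ (by positivity),
    ← MeasureTheory.integral_const_mul]
  congr 1 with y
  rw [LSeries.term_of_ne_zero hn, Complex.ofReal_div,
    Complex.div_cpow_ofReal_nonneg hn0.le hx.le, Complex.cpow_neg, Complex.cpow_neg]
  push_cast
  field_simp

lemma hasSum_integral_term_mul_cpow_mul (hσ : 1 ≤ σ) (hb : LSeriesSummable b σ) (hx : 0 < x) :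
    HasSum (fun n ↦ ∫ y : ℝ, LSeries.term b ((σ : ℂ) + y * Complex.I) n *
      ((x : ℂ) ^ ((σ : ℂ) + y * Complex.I) *
        (1 / (((σ : ℂ) + y * Complex.I) * ((σ : ℂ) + y * Complex.I + 1)))))
      (∫ y : ℝ, LSeries b ((σ : ℂ) + y * Complex.I) * ((x : ℂ) ^ ((σ : ℂ) + y * Complex.I) *
        (1 / (((σ : ℂ) + y * Complex.I) * ((σ : ℂ) + y * Complex.I + 1))))) := by
  set F : ℕ → ℝ → ℂ := fun n y ↦ LSeries.term b ((σ : ℂ) + y * Complex.I) n *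
    ((x : ℂ) ^ ((σ : ℂ) + y * Complex.I) *
      (1 / (((σ : ℂ) + y * Complex.I) * ((σ : ℂ) + y * Complex.I + 1))))
  have norm_le (n : ℕ) (y : ℝ) : ‖F n y‖ ≤
      ‖LSeries.term b σ n‖ * (x ^ σ * (2 * (1 + ‖y‖) ^ (-2 : ℝ))) := by
    have norm_term : ‖LSeries.term b ((σ : ℂ) + y * Complex.I) n‖ = ‖LSeries.term b σ n‖ := by
      simp [LSeries.norm_term_eq]
    simp only [F, norm_mul, norm_ofReal_cpow_add_mul_I hx, norm_term]
    gcongr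
    exact norm_one_div_mul_add_one_le hσ y
  have integrable_bound (n : ℕ) := (((integrable_one_add_norm_rpow one_lt_two).const_mul
    2).const_mul (x ^ σ)).const_mul ‖LSeries.term b σ n‖
  have integrable_F (n : ℕ) : MeasureTheory.Integrable (F n) := by
    refine (integrable_bound n).mono' (Measurable.aestronglyMeasurable ?_) (.of_forall (norm_le n))
    simp only [F, LSeries.term_def]
    split_ifs
    · fun_prop
    · fun_prop
  have summable_integral : Summable fun n ↦ ∫ y, ‖F n y‖ := by
    refine Summable.of_nonneg_of_le (fun n ↦ by positivity) (fun n ↦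
      MeasureTheory.integral_mono (integrable_F n).norm (integrable_bound n) (norm_le n)) ?_
    simp only [MeasureTheory.integral_const_mul]
    exact hb.norm.mul_right _
  have := MeasureTheory.hasSum_integral_of_summable_integral_norm integrable_F summable_integral
  simpa only [F, tsum_mul_right, ← LSeries.eq_1] using this

lemma integral_LSeries_mul_cpow_mul (hσ : 1 ≤ σ) (hb : LSeriesSummable b σ) (hx : 0 < x) :
    ∫ y : ℝ, LSeries b ((σ : ℂ) + y * Complex.I) * ((x : ℂ) ^ ((σ : ℂ) + y * Complex.I) *
      (1 / (((σ : ℂ) + y * Complex.I) * ((σ : ℂ) + y * Complex.I + 1)))) =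
      2 * Real.pi / x * ∑ n ∈ Finset.Ioc 0 ⌊x⌋₊, b n * (x - n) := by
  rw [← (hasSum_integral_term_mul_cpow_mul hσ hb hx).tsum_eq, Finset.mul_sum,
    tsum_eq_sum (s := Finset.Ioc 0 ⌊x⌋₊)]
  · refine Finset.sum_congr rfl fun n hn ↦ ?_
    rw [Finset.mem_Ioc] at hn
    have hnx : n / x ≤ 1 := (div_le_one hx).mpr ((Nat.le_floor_iff hx.le).mp hn.2)
    have hxC : (x : ℂ) ≠ 0 := by exact_mod_cast hx.ne'
    rw [integral_term_mul_cpow_mul hσ hx hn.1.ne', cesaroKernel_of_le_one hnx]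
    push_cast
    field_simp
  · intro n hn
    rcases eq_or_ne n 0 with rfl | hn0
    · simp
    · have hxn : 1 ≤ n / x := by
        rw [Finset.mem_Ioc, not_and, not_le, Nat.floor_lt hx.le] at hn
        exact (one_le_div hx).mpr (hn hn0.bot_lt).le
      rw [integral_term_mul_cpow_mul hσ hx hn0, cesaroKernel_of_one_le hxn, mul_zero, mul_zero]

lemma norm_sum_mul_sub_le_of_norm_LSeries_le {K r : ℝ} (hσ : 1 ≤ σ) (hr : r < 1)
    (hb : LSeriesSummable b σ)
    (hbK : ∀ y : ℝ, ‖LSeries b ((σ : ℂ) + y * Complex.I)‖ ≤ K * (1 + |y|) ^ r) (hx : 0 < x) :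
    ‖∑ n ∈ Finset.Ioc 0 ⌊x⌋₊, b n * (x - n)‖ ≤
      K * (∫ y : ℝ, (1 + ‖y‖) ^ (-(2 - r))) * x ^ σ * x := by
  have hK : 0 ≤ K := by simpa using (norm_nonneg _).trans (hbK 0)
  have integral_le : ‖∫ y : ℝ, LSeries b ((σ : ℂ) + y * Complex.I) *
      ((x : ℂ) ^ ((σ : ℂ) + y * Complex.I) *
        (1 / (((σ : ℂ) + y * Complex.I) * ((σ : ℂ) + y * Complex.I + 1))))‖ ≤
      ∫ y : ℝ, (K * x ^ σ * 2) * (1 + ‖y‖) ^ (-(2 - r)) := by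
    refine MeasureTheory.norm_integral_le_of_norm_le
      ((integrable_one_add_norm_rpow (by linarith)).const_mul _) (.of_forall fun y ↦ ?_)
    rw [norm_mul, norm_mul, norm_ofReal_cpow_add_mul_I hx]
    calc _ ≤ (K * (1 + |y|) ^ r) * (x ^ σ * (2 * (1 + ‖y‖) ^ (-2 : ℝ))) := by
          gcongr
          · exact hbK y
          · exact norm_one_div_mul_add_one_le hσ y
      _ = (K * x ^ σ * 2) * ((1 + ‖y‖) ^ r * (1 + ‖y‖) ^ (-2 : ℝ)) := by
          rw [Real.norm_eq_abs]; ring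
      _ = _ := by rw [← Real.rpow_add (by positivity)]; congr 2; ring
  have norm_factor : ‖(2 * Real.pi / x : ℂ)‖ = 2 * Real.pi / x := by
    simp [abs_of_pos Real.pi_pos, abs_of_pos hx]
  rw [integral_LSeries_mul_cpow_mul hσ hb hx, MeasureTheory.integral_const_mul, norm_mul,
    norm_factor] at integral_le
  set S := ‖∑ n ∈ Finset.Ioc 0 ⌊x⌋₊, b n * (x - n)‖
  have hpi : 1 ≤ Real.pi := by linarith [Real.pi_gt_three]
  calc S = 1 * S := (one_mul _).symm
    _ ≤ Real.pi * S := by gcongr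
    _ = (2 * Real.pi / x * S) * x / 2 := by field_simp
    _ ≤ (K * x ^ σ * 2 * ∫ y : ℝ, (1 + ‖y‖) ^ (-(2 - r))) * x / 2 := by gcongr
    _ = K * (∫ y : ℝ, (1 + ‖y‖) ^ (-(2 - r))) * x ^ σ * x := by ring

end CesaroMeans

section SmoothedPNT

open ArithmeticFunction (vonMangoldt)

/-- The coefficients `Λ n - 1` of the Dirichlet series of `-ζ' / ζ - ζ`. -/
noncomputable def vonMangoldtSubOne (n : ℕ) : ℂ := (vonMangoldt n : ℂ) - 1

lemma LSeriesSummable_vonMangoldtSubOne {s : ℂ} (hs : 1 < s.re) :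
    LSeriesSummable vonMangoldtSubOne s :=
  (ArithmeticFunction.LSeriesSummable_vonMangoldt hs).sub (LSeriesSummable_one_iff.mpr hs)

lemma LSeries_vonMangoldtSubOne {s : ℂ} (hs : 1 < s.re) :
    LSeries vonMangoldtSubOne s = negLogDerivZetaSubZeta s := by
  rw [negLogDerivZetaSubZeta_eq (by rintro rfl; simp at hs)
    (riemannZeta_ne_zero_of_one_lt_re hs),
    ← ArithmeticFunction.LSeries_vonMangoldt_eq_deriv_riemannZeta_div hs,
    ← LSeries_one_eq_riemannZeta hs]
  exact LSeries_sub (ArithmeticFunction.LSeriesSummable_vonMangoldt hs)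
    (LSeriesSummable_one_iff.mpr hs)

lemma abscissaOfAbsConv_vonMangoldtSubOne_lt {s : ℂ} (hs : 1 < s.re) :
    LSeries.abscissaOfAbsConv vonMangoldtSubOne < s.re := by
  have : LSeries.abscissaOfAbsConv vonMangoldtSubOne ≤ (1 : ℝ) :=
    LSeries.abscissaOfAbsConv_le_of_forall_lt_LSeriesSummable fun y hy ↦
      LSeriesSummable_vonMangoldtSubOne (by simpa using hy)
  exact this.trans_lt (by exact_mod_cast hs)

lemma LSeriesSummable_logMul_vonMangoldtSubOne (k : ℕ) {s : ℂ} (hs : 1 < s.re) :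
    LSeriesSummable (LSeries.logMul^[k] vonMangoldtSubOne) s := by
  refine LSeriesSummable_of_abscissaOfAbsConv_lt_re ?_
  rw [LSeries.absicssaOfAbsConv_logPowMul]
  exact abscissaOfAbsConv_vonMangoldtSubOne_lt hs

lemma norm_LSeries_logMul_vonMangoldtSubOne (k : ℕ) {s : ℂ} (hs : 1 < s.re) :
    ‖LSeries (LSeries.logMul^[k] vonMangoldtSubOne) s‖ =
      ‖iteratedDeriv k negLogDerivZetaSubZeta s‖ := by
  have heq : LSeries vonMangoldtSubOne =ᶠ[nhds s] negLogDerivZetaSubZeta := by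
    filter_upwards [(isOpen_lt continuous_const Complex.continuous_re).mem_nhds hs] with z hz
    exact LSeries_vonMangoldtSubOne hz
  rw [← heq.iteratedDeriv_eq, LSeries_iteratedDeriv k (abscissaOfAbsConv_vonMangoldtSubOne_lt hs)]
  simp

lemma iterate_logMul_apply (f : ℕ → ℂ) (k n : ℕ) :
    (LSeries.logMul^[k] f) n = (Real.log n : ℂ) ^ k * f n := by
  induction k generalizing n with
  | zero => simp
  | succ k ih =>
    rw [Function.iterate_succ_apply', LSeries.logMul, ih, Complex.natCast_log]
    ring

lemma rpow_one_add_inv_log_add_two_le {x : ℝ} (hx : 1 ≤ x) :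
    x ^ (1 + 1 / Real.log (x + 2)) ≤ Real.exp 1 * x := by
  have hlog : 0 < Real.log (x + 2) := Real.log_pos (by linarith)
  have hle : Real.log x * (1 / Real.log (x + 2)) ≤ 1 := by
    rw [mul_one_div, div_le_one hlog]
    gcongr
    linarith
  rw [Real.rpow_add (by linarith), Real.rpow_one, mul_comm,
    Real.rpow_def_of_pos (by linarith) (1 / _)]
  gcongr

/-- The Cesàro sum `∑_{n ≤ N} b n (N - n)`, that is, the sum of the partial sums of `b` below
`N`. It is what contour integration controls absolutely, before desmoothing. -/
noncomputable def cesaroSum (b : ℕ → ℝ) (N : ℕ) : ℝ := ∑ n ∈ Finset.Ioc 0 N, b n * (N - n)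

lemma exists_abs_cesaroSum_vonMangoldt_sub_one_mul_log_pow_le (k : ℕ) :
    ∃ K : ℝ, 0 ≤ K ∧ ∀ N : ℕ,
      |cesaroSum (fun n ↦ (vonMangoldt n - 1) * Real.log n ^ k) N| ≤ K * (N : ℝ) ^ 2 := by
  obtain ⟨K, hK, h⟩ := exists_norm_iteratedDeriv_negLogDerivZetaSubZeta_le k one_half_pos
  set I := ∫ y : ℝ, (1 + ‖y‖) ^ (-(2 - 1 / 2 : ℝ))
  have : 0 ≤ I := MeasureTheory.integral_nonneg fun y ↦ by positivity
  refine ⟨K * I * Real.exp 1, by positivity, fun N ↦ ?_⟩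
  rcases Nat.eq_zero_or_pos N with rfl | hN
  · simp [cesaroSum]
  have hN1 : (1 : ℝ) ≤ N := by exact_mod_cast hN
  have hlog : 1 ≤ Real.log ((N : ℝ) + 2) := by
    rw [Real.le_log_iff_exp_le (by positivity)]
    linarith [Real.exp_one_lt_d9]
  set σ := 1 + 1 / Real.log ((N : ℝ) + 2)
  have hσ1 : 1 < σ := lt_add_of_pos_right _ (by positivity)
  have hσ2 : σ ≤ 2 := by
    have : 1 / Real.log ((N : ℝ) + 2) ≤ 1 := (div_le_one (by positivity)).mpr hlog
    linarith
  have cesaro := norm_sum_mul_sub_le_of_norm_LSeries_le (b := LSeries.logMul^[k] vonMangoldtSubOne)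
    hσ1.le one_half_lt_one (LSeriesSummable_logMul_vonMangoldtSubOne k (by simpa using hσ1))
    (fun y ↦ by
      rw [norm_LSeries_logMul_vonMangoldtSubOne k (by simpa using hσ1)]
      simpa using h (σ + y * Complex.I) ⟨by simpa using hσ1.le, by simpa using hσ2⟩)
    (show (0 : ℝ) < N by linarith)
  have sum_eq : ∑ n ∈ Finset.Ioc 0 ⌊(N : ℝ)⌋₊,
      (LSeries.logMul^[k] vonMangoldtSubOne) n * ((N : ℝ) - n) =
      (cesaroSum (fun n ↦ (vonMangoldt n - 1) * Real.log n ^ k) N : ℂ) := by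
    rw [Nat.floor_natCast, cesaroSum, Complex.ofReal_sum]
    refine Finset.sum_congr rfl fun n _ ↦ ?_
    rw [iterate_logMul_apply, vonMangoldtSubOne]
    push_cast
    ring
  rw [sum_eq, Complex.norm_real, Real.norm_eq_abs] at cesaro
  calc _ ≤ K * I * (N : ℝ) ^ σ * N := cesaro
    _ ≤ K * I * (Real.exp 1 * N) * N := by
        gcongr
        exact rpow_one_add_inv_log_add_two_le hN1
    _ = K * I * Real.exp 1 * (N : ℝ) ^ 2 := by ring

end SmoothedPNT

section Desmoothing

variable {b : ℕ → ℝ} {L : ℝ} {N h : ℕ}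

lemma cesaroSum_add_sub_cesaroSum (b : ℕ → ℝ) (N h : ℕ) :
    cesaroSum b (N + h) - cesaroSum b N =
      h * ∑ n ∈ Finset.Ioc 0 N, b n + ∑ n ∈ Finset.Ioc N (N + h), b n * (N + h - n) := by
  have split := Finset.sum_Ioc_consecutive (fun n ↦ b n * ((N + h : ℕ) - n : ℝ)) N.zero_le
    (N.le_add_right h)
  rw [cesaroSum, cesaroSum, ← split, add_sub_right_comm, ← Finset.sum_sub_distrib, Finset.mul_sum]
  push_cast
  congr 1
  exact Finset.sum_congr rfl fun n _ ↦ by ring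

lemma mul_sum_Ioc_le_cesaroSum_sub (hL : 0 ≤ L) (hb : ∀ n ≤ N + h, -L ≤ b n) :
    h * ∑ n ∈ Finset.Ioc 0 N, b n ≤ cesaroSum b (N + h) - cesaroSum b N + L * h ^ 2 := by
  have tail_ge : ∑ _n ∈ Finset.Ioc N (N + h), -(L * h) ≤
      ∑ n ∈ Finset.Ioc N (N + h), b n * (N + h - n) := by
    refine Finset.sum_le_sum fun n hn ↦ ?_
    obtain ⟨hNn, hnN⟩ := Finset.mem_Ioc.mp hn
    have hNn' : (N : ℝ) ≤ n := by exact_mod_cast hNn.le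
    have hnN' : (n : ℝ) ≤ N + h := by exact_mod_cast hnN
    nlinarith [hb n hnN]
  rw [cesaroSum_add_sub_cesaroSum]
  simp only [Finset.sum_const, Nat.card_Ioc, Nat.add_sub_cancel_left, nsmul_eq_mul] at tail_ge
  linarith

lemma cesaroSum_sub_le_mul_sum_Ioc (hL : 0 ≤ L) (hb : ∀ n ≤ N + h, -L ≤ b n) :
    cesaroSum b (N + h) - cesaroSum b N ≤ h * ∑ n ∈ Finset.Ioc 0 (N + h), b n + L * h ^ 2 := by
  have tail_le : ∑ n ∈ Finset.Ioc N (N + h), b n * (N + h - n) ≤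
      ∑ n ∈ Finset.Ioc N (N + h), (h * b n + L * h) := by
    refine Finset.sum_le_sum fun n hn ↦ ?_
    obtain ⟨hNn, hnN⟩ := Finset.mem_Ioc.mp hn
    have hNn' : (N : ℝ) ≤ n := by exact_mod_cast hNn.le
    have hnN' : (n : ℝ) ≤ N + h := by exact_mod_cast hnN
    nlinarith [hb n hnN]
  rw [cesaroSum_add_sub_cesaroSum, ← Finset.sum_Ioc_consecutive b N.zero_le (N.le_add_right h)]
  simp only [Finset.sum_add_distrib, ← Finset.mul_sum, Finset.sum_const, Nat.card_Ioc,
    Nat.add_sub_cancel_left, nsmul_eq_mul] at tail_le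
  linarith

lemma mul_abs_sum_Ioc_le_of_abs_cesaroSum_le {E : ℝ} (hL : 0 ≤ L) (hN : h ≤ N)
    (hb : ∀ n ≤ N + h, -L ≤ b n) (hE : ∀ n ≤ N + h, |cesaroSum b n| ≤ E) :
    h * |∑ n ∈ Finset.Ioc 0 N, b n| ≤ 2 * E + L * h ^ 2 := by
  have upper := mul_sum_Ioc_le_cesaroSum_sub hL hb
  have lower := cesaroSum_sub_le_mul_sum_Ioc (N := N - h) (h := h) hL fun n hn ↦ hb n (by omega)
  rw [Nat.sub_add_cancel hN] at lower
  have above := abs_le.mp (hE (N + h) le_rfl)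
  have here := abs_le.mp (hE N (by omega))
  have below := abs_le.mp (hE (N - h) (by omega))
  rw [← abs_of_nonneg (Nat.cast_nonneg h : (0 : ℝ) ≤ h), ← abs_mul, abs_le,
    abs_of_nonneg (Nat.cast_nonneg h)]
  constructor <;> linarith [above.1, above.2, here.1, here.2, below.1, below.2]

end Desmoothing

section VonMangoldtLogPow

open ArithmeticFunction (vonMangoldt)

lemma neg_log_pow_le_vonMangoldt_sub_one_mul (k : ℕ) {n m : ℕ} (h : n ≤ m) :
    -Real.log m ^ k ≤ (vonMangoldt n - 1) * Real.log n ^ k := by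
  have log_le : Real.log n ≤ Real.log m := by
    rcases Nat.eq_zero_or_pos n with rfl | hn
    · simpa using Real.log_natCast_nonneg m
    · gcongr
  have pow_le : Real.log n ^ k ≤ Real.log m ^ k := by
    gcongr
  have := mul_nonneg (ArithmeticFunction.vonMangoldt_nonneg (n := n))
    (pow_nonneg (Real.log_natCast_nonneg n) k)
  linarith

lemma eventually_log_natCast_pow_le (A : ℕ) : ∀ᶠ N : ℕ in atTop, Real.log N ^ A ≤ N := by
  filter_upwards [((Real.isLittleO_pow_log_id_atTop (n := A)).comp_tendsto
    tendsto_natCast_atTop_atTop).bound one_pos] with N hN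
  simpa [abs_of_nonneg (Real.log_natCast_nonneg N)] using hN

lemma eventually_one_le_log_natCast : ∀ᶠ N : ℕ in atTop, 1 ≤ Real.log N :=
  (Real.tendsto_log_atTop.comp tendsto_natCast_atTop_atTop).eventually_ge_atTop 1

-- The weight `log ^ (2A)` makes the desmoothing at scale `N / log N ^ A` save `log N ^ A`.
lemma isBigO_sum_vonMangoldt_sub_one_mul_log_pow (A : ℕ) :
    (fun N : ℕ ↦ ∑ n ∈ Finset.Ioc 0 N, (vonMangoldt n - 1) * Real.log n ^ (2 * A)) =O[atTop]
      fun N ↦ N * Real.log N ^ A := by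
  obtain ⟨K, hK, hcesaro⟩ := exists_abs_cesaroSum_vonMangoldt_sub_one_mul_log_pow_le (2 * A)
  refine Asymptotics.IsBigO.of_bound (8 * K + 2 * 4 ^ A) ?_
  filter_upwards [eventually_log_natCast_pow_le A, eventually_one_le_log_natCast,
    eventually_ge_atTop 2] with N hlogN hlog hN
  set l := Real.log N
  set D := ∑ n ∈ Finset.Ioc 0 N, (vonMangoldt n - 1) * Real.log n ^ (2 * A)
  have hN0 : (0 : ℝ) < N := by positivity
  have hlA : 0 < l ^ A := by positivity
  have one_le_scale : 1 ≤ N / l ^ A := (one_le_div hlA).mpr hlogN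
  set h := ⌈N / l ^ A⌉₊
  have hh0 : 0 < (h : ℝ) := by exact_mod_cast Nat.ceil_pos.mpr (by positivity)
  have hhN : h ≤ N := Nat.ceil_le.mpr (div_le_self hN0.le (one_le_pow₀ hlog))
  have scale_le : N / l ^ A ≤ h := Nat.le_ceil _
  have le_scale : (h : ℝ) ≤ 2 * (N / l ^ A) := by
    linarith [Nat.ceil_lt_add_one (a := (N : ℝ) / l ^ A) (by positivity)]
  have log_two_mul_le : Real.log (2 * N : ℕ) ≤ 2 * l := by
    rw [Nat.cast_mul, Real.log_mul (by norm_num) (by positivity), two_mul]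
    gcongr
    exact Real.log_le_log two_pos (by exact_mod_cast hN)
  have desmoothed : h * |D| ≤ 2 * (K * (2 * N) ^ 2) + (2 * l) ^ (2 * A) * h ^ 2 := by
    refine mul_abs_sum_Ioc_le_of_abs_cesaroSum_le (by positivity) hhN (fun n hn ↦ ?_)
      fun n hn ↦ (hcesaro n).trans ?_
    · refine le_trans ?_ (neg_log_pow_le_vonMangoldt_sub_one_mul (2 * A) (m := 2 * N) (by omega))
      gcongr
    · gcongr
      exact_mod_cast (by omega : n ≤ 2 * N)
  have N_le : (N : ℝ) ≤ h * l ^ A := (div_le_iff₀ hlA).mp scale_le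
  rw [Real.norm_eq_abs, Real.norm_of_nonneg (by positivity)]
  refine le_of_mul_le_mul_left ?_ hh0
  calc h * |D| ≤ 8 * K * N * N + 4 ^ A * l ^ A * l ^ A * h * h := by
        refine desmoothed.trans_eq ?_
        rw [mul_pow 2 l, pow_mul 2, two_mul A, pow_add l]
        ring
    _ ≤ 8 * K * N * (h * l ^ A) + 4 ^ A * l ^ A * l ^ A * h * (2 * (N / l ^ A)) := by gcongr
    _ = h * ((8 * K + 2 * 4 ^ A) * (N * l ^ A)) := by field_simp

end VonMangoldtLogPow

section AbelSummation

variable {b g : ℕ → ℝ} {c : ℝ} {M X : ℕ}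

lemma abs_sum_Ioc_mul_le_of_abs_sum_Ioc_le (hMX : M ≤ X)
    (hb : ∀ n, M ≤ n → n ≤ X → |∑ k ∈ Finset.Ioc 0 n, b k| ≤ c * n)
    (hg0 : ∀ n, M < n → 0 ≤ g n) (hg : AntitoneOn g (Set.Ioi M)) :
    |∑ n ∈ Finset.Ioc M X, b n * g n| ≤
      c * (2 * M * g (M + 1) + ∑ n ∈ Finset.Ioc M X, g n) := by
  set D : ℕ → ℝ := fun n ↦ ∑ k ∈ Finset.Ioc 0 n, b k with hD
  have abs_D_mul_le {n : ℕ} (hMn : M ≤ n) (hnX : n ≤ X) {w : ℝ} (hw : 0 ≤ w) :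
      |D n * w| ≤ c * n * w := by
    rw [abs_mul, abs_of_nonneg hw]
    exact mul_le_mul_of_nonneg_right (hb n hMn hnX) hw
  -- Induction needs the boundary term `D n * g (n + 1)` of the summation by parts.
  have invariant (n : ℕ) (hMn : M ≤ n) (hnX : n ≤ X) :
      |∑ k ∈ Finset.Ioc M n, b k * g k - D n * g (n + 1)| + c * n * g (n + 1) ≤
        c * (2 * M * g (M + 1) + ∑ k ∈ Finset.Ioc M n, g k) := by
    induction n, hMn using Nat.le_induction with
    | base =>
      have := abs_D_mul_le le_rfl hnX (hg0 (M + 1) M.lt_succ_self)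
      simp only [Finset.Ioc_self, Finset.sum_empty, zero_sub, abs_neg]
      linarith
    | succ n hMn ih =>
      have g_le : g (n + 1 + 1) ≤ g (n + 1) :=
        hg (Set.mem_Ioi.mpr (by omega)) (Set.mem_Ioi.mpr (by omega)) (by omega)
      have hstep := abs_D_mul_le (by omega) hnX (sub_nonneg.mpr g_le)
      have by_parts : ∑ k ∈ Finset.Ioc M n, b k * g k + b (n + 1) * g (n + 1) -
          D (n + 1) * g (n + 1 + 1) =
          (∑ k ∈ Finset.Ioc M n, b k * g k - D n * g (n + 1)) +
            D (n + 1) * (g (n + 1) - g (n + 1 + 1)) := by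
        simp only [hD, Finset.sum_Ioc_succ_top n.zero_le]
        ring
      rw [Finset.sum_Ioc_succ_top hMn, Finset.sum_Ioc_succ_top hMn, by_parts]
      push_cast at hstep ⊢
      linarith [ih (by omega), abs_add_le (∑ k ∈ Finset.Ioc M n, b k * g k - D n * g (n + 1))
        (D (n + 1) * (g (n + 1) - g (n + 1 + 1)))]
  have boundary := abs_D_mul_le hMX le_rfl (hg0 (X + 1) (by omega))
  linarith [invariant X hMX le_rfl,
    abs_sub_abs_le_abs_sub (∑ n ∈ Finset.Ioc M X, b n * g n) (D X * g (X + 1))]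

lemma abs_sum_Ioc_mul_div_sq_le (hM : 0 < M) (hMX : M ≤ X)
    (hb : ∀ n, M ≤ n → n ≤ X → |∑ k ∈ Finset.Ioc 0 n, b k| ≤ c * n)
    (hg0 : ∀ n, M ≤ n → 0 ≤ g n) (hg : AntitoneOn g (Set.Ici M)) :
    |∑ n ∈ Finset.Ioc M X, b n * (g n / n ^ 2)| ≤ 3 * c * g M / M := by
  have hM0 : (0 : ℝ) < M := by exact_mod_cast hM
  have hc : 0 ≤ c := nonneg_of_mul_nonneg_left ((abs_nonneg _).trans (hb M le_rfl hMX)) hM0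
  have hgM := hg0 M le_rfl
  have g_le {n : ℕ} (hn : M ≤ n) : g n ≤ g M := hg Set.self_mem_Ici hn hn
  have antitone : AntitoneOn (fun n : ℕ ↦ g n / (n : ℝ) ^ 2) (Set.Ioi M) := by
    intro m (hm : M < m) n (hn : M < n) hmn
    have hm0 : (0 : ℝ) < m := by exact_mod_cast hM.trans hm
    exact div_le_div₀ (hg0 m hm.le) (hg hm.le hn.le hmn) (by positivity) (by gcongr)
  have head_le : 2 * M * (g (M + 1) / ((M + 1 : ℕ) : ℝ) ^ 2) ≤ 2 * M * (g M / (M : ℝ) ^ 2) := by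
    gcongr
    · exact g_le M.le_succ
    · exact M.le_succ
  have tail_le : ∑ n ∈ Finset.Ioc M X, g n / (n : ℝ) ^ 2 ≤ g M * (M : ℝ)⁻¹ := calc
    _ ≤ ∑ n ∈ Finset.Ioc M X, g M * ((n : ℝ) ^ 2)⁻¹ := by
      refine Finset.sum_le_sum fun n hn ↦ ?_
      rw [div_eq_mul_inv]
      gcongr
      exact g_le (Finset.mem_Ioc.mp hn).1.le
    _ ≤ g M * ((M : ℝ)⁻¹ - (X : ℝ)⁻¹) := by
      rw [← Finset.mul_sum]
      gcongr
      exact sum_Ioc_inv_sq_le_sub hM.ne' hMX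
    _ ≤ g M * (M : ℝ)⁻¹ := by
      gcongr
      exact sub_le_self _ (by positivity)
  calc _ ≤ c * (2 * M * (g (M + 1) / ((M + 1 : ℕ) : ℝ) ^ 2) +
        ∑ n ∈ Finset.Ioc M X, g n / (n : ℝ) ^ 2) :=
      abs_sum_Ioc_mul_le_of_abs_sum_Ioc_le hMX hb
        (fun n hn ↦ div_nonneg (hg0 n hn.le) (by positivity)) antitone
    _ ≤ c * (2 * M * (g M / (M : ℝ) ^ 2) + g M * (M : ℝ)⁻¹) := by gcongr
    _ = 3 * c * g M / M := by field_simp; ring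

end AbelSummation

section SqrtRange

open ArithmeticFunction (vonMangoldt)

lemma tendsto_natSqrt_atTop : Tendsto Nat.sqrt atTop atTop :=
  tendsto_atTop.mpr fun m ↦ (eventually_ge_atTop (m * m)).mono fun _ hn ↦ Nat.le_sqrt.mpr hn

lemma sqrt_natCast_le_two_mul_natSqrt {N : ℕ} (hN : 0 < N) : √(N : ℝ) ≤ 2 * Nat.sqrt N := by
  have hM : 1 ≤ Nat.sqrt N := Nat.sqrt_pos.mpr hN
  rw [Real.sqrt_le_left (by positivity)]
  exact_mod_cast (Nat.lt_succ_sqrt' N).le.trans (Nat.pow_le_pow_left (by omega) 2)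

lemma log_le_four_mul_log_natSqrt {N : ℕ} (hN : 4 ≤ N) :
    Real.log N ≤ 4 * Real.log (Nat.sqrt N) := by
  have hM : 2 ≤ Nat.sqrt N := Nat.le_sqrt.mpr hN
  have : N ≤ Nat.sqrt N ^ 4 := by
    calc N ≤ (Nat.sqrt N + 1) ^ 2 := (Nat.lt_succ_sqrt' N).le
      _ ≤ (Nat.sqrt N ^ 2) ^ 2 := by gcongr; nlinarith
      _ = Nat.sqrt N ^ 4 := by ring
  calc Real.log N ≤ Real.log ((Nat.sqrt N : ℝ) ^ 4) := by gcongr; exact_mod_cast this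
    _ = 4 * Real.log (Nat.sqrt N) := by rw [Real.log_pow]; norm_num

lemma antitoneOn_one_div_log_natCast_pow (k : ℕ) :
    AntitoneOn (fun n : ℕ ↦ 1 / Real.log n ^ k) (Set.Ici 2) := by
  intro m (hm : 2 ≤ m) n _ hmn
  have : (0 : ℝ) < m := by positivity
  have hlog : 0 < Real.log m := Real.log_pos (by exact_mod_cast hm)
  dsimp only
  gcongr

lemma isBigO_sum_Ioc_sqrt_vonMangoldt_sub_one_div_sq (A : ℕ) :
    (fun N : ℕ ↦ ∑ n ∈ Finset.Ioc (Nat.sqrt N) N, (vonMangoldt n - 1) / (n : ℝ) ^ 2) =O[atTop]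
      fun N ↦ 1 / (√(N : ℝ) * Real.log N ^ A) := by
  obtain ⟨C, hC, hbound⟩ := (isBigO_sum_vonMangoldt_sub_one_mul_log_pow A).exists_nonneg
  refine Asymptotics.IsBigO.of_bound (3 * C * 4 ^ (2 * A) * 2) ?_
  filter_upwards [tendsto_natSqrt_atTop.eventually (eventually_forall_ge_atTop.mpr hbound.bound),
    eventually_ge_atTop 4] with N hsum hN
  set M := Nat.sqrt N
  have hM : 2 ≤ M := Nat.le_sqrt.mpr hN
  have hMN : M ≤ N := Nat.sqrt_le_self N
  have log_pos {n : ℕ} (hn : M ≤ n) : 0 < Real.log n :=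
    Real.log_pos (by exact_mod_cast hM.trans hn)
  have := log_pos le_rfl
  have hlogN := log_pos hMN
  have partial_sum_le (n : ℕ) (hMn : M ≤ n) (hnN : n ≤ N) :
      |∑ k ∈ Finset.Ioc 0 n, (vonMangoldt k - 1) * Real.log k ^ (2 * A)| ≤
        C * Real.log N ^ A * n := by
    have hlogn := log_pos hMn
    have hn0 : (0 : ℝ) < n := by exact_mod_cast (by omega : 0 < n)
    calc _ ≤ C * (n * Real.log n ^ A) := by
          simpa [abs_of_pos hlogn] using hsum n hMn
      _ ≤ C * (n * Real.log N ^ A) := by gcongr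
      _ = _ := by ring
  rw [Real.norm_eq_abs, Real.norm_of_nonneg (by positivity)]
  calc |∑ n ∈ Finset.Ioc M N, (vonMangoldt n - 1) / (n : ℝ) ^ 2|
      = |∑ n ∈ Finset.Ioc M N, (vonMangoldt n - 1) * Real.log n ^ (2 * A) *
          (1 / Real.log n ^ (2 * A) / (n : ℝ) ^ 2)| := by
        congr 1
        refine Finset.sum_congr rfl fun n hn ↦ ?_
        have := log_pos (Finset.mem_Ioc.mp hn).1.le
        field_simp
    _ ≤ 3 * (C * Real.log N ^ A) * (1 / Real.log M ^ (2 * A)) / M :=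
        abs_sum_Ioc_mul_div_sq_le (by omega) hMN partial_sum_le
          (fun n hn ↦ (one_div_pos.mpr (pow_pos (log_pos hn) _)).le)
          ((antitoneOn_one_div_log_natCast_pow _).mono (Set.Ici_subset_Ici.mpr hM))
    _ ≤ 3 * (C * Real.log N ^ A) * (1 / (Real.log N / 4) ^ (2 * A)) / (√(N : ℝ) / 2) := by
        have := log_le_four_mul_log_natSqrt hN
        have := sqrt_natCast_le_two_mul_natSqrt (N := N) (by omega)
        gcongr <;> linarith
    _ = _ := by
        rw [div_pow, two_mul A, pow_add (Real.log N)]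
        field_simp

lemma isBigO_sum_Ioc_sqrt_not_prime_vonMangoldt_div_sq :
    (fun N : ℕ ↦ ∑ n ∈ Finset.Ioc (Nat.sqrt N) N with ¬ n.Prime, vonMangoldt n / (n : ℝ) ^ 2)
      =O[atTop] fun N ↦ (N : ℝ) ^ (-(3 / 4) : ℝ) := by
  obtain ⟨C, hC⟩ := Chebyshev.psi_sub_theta_le_mul_sqrt
  refine Asymptotics.IsBigO.of_bound (3 * C * 2 ^ (3 / 2 : ℝ)) ?_
  filter_upwards [eventually_ge_atTop 1] with N hN
  set M := Nat.sqrt N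
  have hM : 0 < M := Nat.sqrt_pos.mpr hN
  have hM0 : (0 : ℝ) < M := by exact_mod_cast hM
  have hC0 : 0 ≤ C := by
    simpa using (sub_nonneg.mpr (Chebyshev.theta_le_psi 1)).trans (hC 1)
  have partial_sum_le (n : ℕ) (hMn : M ≤ n) (_ : n ≤ N) :
      |∑ k ∈ Finset.Ioc 0 n, if ¬ k.Prime then vonMangoldt k else 0| ≤ C / √(M : ℝ) * n := by
    rw [← Finset.sum_filter, abs_of_nonneg (Finset.sum_nonneg fun k _ ↦
      ArithmeticFunction.vonMangoldt_nonneg)]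
    calc _ = Chebyshev.psi n - Chebyshev.theta n := by
          rw [Chebyshev.psi_sub_theta_eq_sum_not_prime, Nat.floor_natCast]
      _ ≤ C * √(n : ℝ) := hC n
      _ = C * (n / √(n : ℝ)) := by rw [Real.div_sqrt]
      _ ≤ C * (n / √(M : ℝ)) := by gcongr
      _ = C / √(M : ℝ) * n := by ring
  rw [Real.norm_eq_abs, Real.norm_of_nonneg (by positivity), Finset.sum_filter]
  calc _ = |∑ n ∈ Finset.Ioc M N, (if ¬ n.Prime then vonMangoldt n else 0) *
          (1 / (n : ℝ) ^ 2)| := by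
        simp only [mul_one_div, ite_div, zero_div]
    _ ≤ 3 * (C / √(M : ℝ)) * 1 / M :=
        abs_sum_Ioc_mul_div_sq_le (g := fun _ ↦ 1) hM N.sqrt_le_self partial_sum_le
          (fun _ _ ↦ zero_le_one) antitoneOn_const
    _ = 3 * C * (M : ℝ) ^ (-(3 / 2) : ℝ) := by
        rw [show (-(3 / 2) : ℝ) = -(1 / 2) - 1 by norm_num, Real.rpow_sub_one hM0.ne',
          Real.rpow_neg hM0.le, ← Real.sqrt_eq_rpow]
        ring
    _ ≤ 3 * C * (√(N : ℝ) / 2) ^ (-(3 / 2) : ℝ) := by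
        gcongr 3 * C * ?_
        refine Real.rpow_le_rpow_of_nonpos (by positivity) ?_ (by norm_num)
        linarith [sqrt_natCast_le_two_mul_natSqrt hN]
    _ = _ := by
        rw [Real.div_rpow (by positivity) (by norm_num), Real.sqrt_eq_rpow,
          ← Real.rpow_mul (by positivity), Real.rpow_neg two_pos.le, div_inv_eq_mul]
        norm_num
        ring

end SqrtRange

section PrimePowers

open ArithmeticFunction (vonMangoldt)

lemma sum_vonMangoldt_mul_eq_sum_primesLE (f : ℕ → ℝ) (N : ℕ) :
    ∑ n ∈ Finset.Icc 1 N, vonMangoldt n * f n =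
      ∑ p ∈ Nat.primesLE N, ∑ k ∈ Finset.Icc 1 (Nat.log p N), Real.log p * f (p ^ k) := by
  rw [Finset.sum_sigma']
  symm
  refine Finset.sum_of_injOn (fun i ↦ i.1 ^ i.2) ?_ ?_ ?_ ?_
  · rintro ⟨p, k⟩ hi ⟨q, l⟩ hj h
    simp only [Finset.coe_sigma, Set.mem_sigma_iff, Finset.mem_coe, Nat.mem_primesLE,
      Finset.mem_Icc] at hi hj
    obtain ⟨rfl, rfl⟩ := hi.1.2.pow_inj' hj.1.2 (Nat.one_le_iff_ne_zero.mp hi.2.1)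
      (Nat.one_le_iff_ne_zero.mp hj.2.1) h
    rfl
  · rintro ⟨p, k⟩ hi
    simp only [Finset.coe_sigma, Set.mem_sigma_iff, Finset.mem_coe, Nat.mem_primesLE,
      Finset.mem_Icc] at hi ⊢
    have hN : N ≠ 0 := by have := hi.1.2.pos; omega
    exact ⟨Nat.one_le_pow _ _ hi.1.2.pos, Nat.pow_le_of_le_log hN hi.2.2⟩
  · intro n hn hnot
    rw [Finset.mem_Icc] at hn
    rw [ArithmeticFunction.vonMangoldt_eq_zero_iff.mpr ?_, zero_mul]
    rw [isPrimePow_nat_iff]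
    rintro ⟨p, k, hp, hk, rfl⟩
    refine hnot ⟨⟨p, k⟩, ?_, rfl⟩
    have hpN : p ≤ N := (Nat.le_self_pow hk.ne' p).trans hn.2
    simpa [Nat.mem_primesLE, hp, hpN] using ⟨hk, Nat.le_log_of_pow_le hp.one_lt hn.2⟩
  · rintro ⟨p, k⟩ hi
    simp only [Finset.mem_sigma, Nat.mem_primesLE, Finset.mem_Icc] at hi
    rw [ArithmeticFunction.vonMangoldt_apply_pow (Nat.one_le_iff_ne_zero.mp hi.2.1),
      ArithmeticFunction.vonMangoldt_apply_prime hi.1.2]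

lemma div_sub_one_sub_sum_div_pow {p : ℝ} (hp : 1 < p) (c : ℝ) (K : ℕ) :
    c / (p - 1) - ∑ k ∈ Finset.Icc 1 K, c / p ^ k = c / (p ^ K * (p - 1)) := by
  have h : p - 1 ≠ 0 := by linarith
  induction K with
  | zero => simp
  | succ K ih =>
    rw [Finset.sum_Icc_succ_top (by omega), ← sub_sub, ih]
    field_simp
    ring

/-- The geometric remainder `log p / (p ^ K * (p - 1))` of a prime `p ≤ N`, where `p ^ K` is the
largest power of `p` up to `N`. It is the contribution of `p` to `Delta N`. -/
noncomputable def primeTail (N p : ℕ) : ℝ := Real.log p / ((p : ℝ) ^ Nat.log p N * (p - 1))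

lemma Delta_eq_sum_primesLE (x : ℝ) :
    Delta x = ∑ p ∈ Nat.primesLE ⌊x⌋₊, primeTail ⌊x⌋₊ p := by
  have prime_powers := sum_vonMangoldt_mul_eq_sum_primesLE (fun n ↦ (n : ℝ)⁻¹) ⌊x⌋₊
  push_cast at prime_powers
  simp only [← div_eq_mul_inv] at prime_powers
  rw [Delta, ← Nat.primesLE_eq_filter_range, prime_powers, ← Finset.sum_sub_distrib]
  refine Finset.sum_congr rfl fun p hp ↦ ?_
  exact div_sub_one_sub_sum_div_pow
    (by exact_mod_cast (Nat.prime_of_mem_primesLE hp).one_lt) _ _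

lemma log_div_le_rpow_mul_rpow {p X Z : ℝ} (hp : 1 ≤ p) (hX : 0 < X) (hXZ : X ≤ Z)
    (hpZ : p ^ 3 ≤ Z) :
    Real.log p / Z ≤ 10 * p ^ (-(11 / 10) : ℝ) * X ^ (-(3 / 5) : ℝ) := by
  have hp0 : 0 < p := by linarith
  have hZ0 : 0 < Z := by linarith
  have le_Z : X ^ (3 / 5 : ℝ) * p ^ (6 / 5 : ℝ) ≤ Z := by
    calc _ = X ^ (3 / 5 : ℝ) * (p ^ 3) ^ (2 / 5 : ℝ) := by
          rw [← Real.rpow_natCast_mul hp0.le]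
          norm_num
      _ ≤ Z ^ (3 / 5 : ℝ) * Z ^ (2 / 5 : ℝ) := by gcongr
      _ = Z := by rw [← Real.rpow_add hZ0]; norm_num
  have log_le : Real.log p ≤ 10 * p ^ (1 / 10 : ℝ) :=
    (Real.log_le_rpow_div hp0.le (by norm_num : (0 : ℝ) < 1 / 10)).trans_eq (by ring)
  calc _ ≤ 10 * p ^ (1 / 10 : ℝ) / (X ^ (3 / 5 : ℝ) * p ^ (6 / 5 : ℝ)) := by gcongr
    _ = 10 * (p ^ (1 / 10 : ℝ) * p ^ (-(6 / 5) : ℝ)) * X ^ (-(3 / 5) : ℝ) := by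
        rw [Real.rpow_neg hp0.le, Real.rpow_neg hX.le]
        field_simp
    _ = _ := by rw [← Real.rpow_add hp0]; norm_num

lemma primeTail_le_two_mul_log_div {p : ℕ} (hp : p.Prime) (N : ℕ) :
    primeTail N p ≤ 2 * (Real.log p / (p : ℝ) ^ (Nat.log p N + 1)) := by
  have hp2 : (2 : ℝ) ≤ p := by exact_mod_cast hp.two_le
  have := Real.log_natCast_nonneg p
  calc _ ≤ Real.log p / ((p : ℝ) ^ Nat.log p N * (p / 2)) := by
        rw [primeTail]; gcongr; linarith
    _ = _ := by rw [pow_succ]; field_simp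

lemma abs_primeTail_sub_ite_le {p N : ℕ} (hp : p.Prime) (hpN : p ≤ N) :
    |primeTail N p - if N < p ^ 2 then Real.log p / (p : ℝ) ^ 2 else 0| ≤
      20 * (p : ℝ) ^ (-(11 / 10) : ℝ) * (N : ℝ) ^ (-(3 / 5) : ℝ) := by
  have hp2 : (2 : ℝ) ≤ p := by exact_mod_cast hp.two_le
  have hN0 : (0 : ℝ) < N := by exact_mod_cast hp.pos.trans_le hpN
  have hlog := Real.log_natCast_nonneg p
  have tail_nonneg : 0 ≤ primeTail N p :=
    div_nonneg hlog (mul_nonneg (by positivity) (by linarith))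
  suffices h : ∃ k, 3 ≤ k ∧ N ≤ p ^ k ∧
      |primeTail N p - if N < p ^ 2 then Real.log p / (p : ℝ) ^ 2 else 0| ≤
        2 * (Real.log p / (p : ℝ) ^ k) by
    obtain ⟨k, hk, hNk, hle⟩ := h
    have := log_div_le_rpow_mul_rpow (p := p) (Z := (p : ℝ) ^ k) (by linarith) hN0
      (by exact_mod_cast hNk) (pow_le_pow_right₀ (by linarith) hk)
    linarith
  split_ifs with h
  · have log_eq : Nat.log p N = 1 := by
      rw [Nat.log_eq_iff (by omega)]
      simpa using ⟨hpN, h⟩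
    have hp1 : 0 < (p : ℝ) - 1 := by linarith
    have diff_eq : primeTail N p - Real.log p / (p : ℝ) ^ 2 = primeTail N p / p := by
      rw [primeTail, log_eq]
      field_simp
      ring
    refine ⟨3, le_rfl, h.le.trans (Nat.pow_le_pow_right hp.pos (by norm_num)), ?_⟩
    rw [diff_eq, abs_of_nonneg (by positivity), div_le_iff₀ (by positivity)]
    refine (primeTail_le_two_mul_log_div hp N).trans_eq ?_
    rw [log_eq]
    field_simp
  · have two_le_log : 2 ≤ Nat.log p N := Nat.le_log_of_pow_le hp.one_lt (not_lt.mp h)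
    refine ⟨Nat.log p N + 1, by omega, (Nat.lt_pow_succ_log_self hp.one_lt N).le, ?_⟩
    rw [sub_zero, abs_of_nonneg tail_nonneg]
    exact primeTail_le_two_mul_log_div hp N

lemma isBigO_Delta_natCast_sub_sum_Ioc_sqrt_prime :
    (fun N : ℕ ↦ Delta N - ∑ p ∈ Finset.Ioc (Nat.sqrt N) N with p.Prime, Real.log p / (p : ℝ) ^ 2)
      =O[atTop] fun N ↦ (N : ℝ) ^ (-(3 / 5) : ℝ) := by
  have summable : Summable fun n : ℕ ↦ (n : ℝ) ^ (-(11 / 10) : ℝ) :=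
    Real.summable_nat_rpow.mpr (by norm_num)
  refine Asymptotics.IsBigO.of_bound (20 * ∑' n : ℕ, (n : ℝ) ^ (-(11 / 10) : ℝ))
    (.of_forall fun N ↦ ?_)
  have filter_eq : {p ∈ Finset.Ioc (Nat.sqrt N) N | p.Prime} =
      {p ∈ Nat.primesLE N | N < p ^ 2} := by
    ext p
    simp only [Finset.mem_filter, Finset.mem_Ioc, Nat.mem_primesLE, Nat.sqrt_lt']
    tauto
  have Delta_eq : Delta N = ∑ p ∈ Nat.primesLE N, primeTail N p := by
    rw [Delta_eq_sum_primesLE, Nat.floor_natCast]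
  rw [Delta_eq, filter_eq, Finset.sum_filter, ← Finset.sum_sub_distrib, Real.norm_eq_abs,
    Real.norm_of_nonneg (by positivity)]
  calc _ ≤ ∑ p ∈ Nat.primesLE N, 20 * (p : ℝ) ^ (-(11 / 10) : ℝ) * (N : ℝ) ^ (-(3 / 5) : ℝ) :=
        (Finset.abs_sum_le_sum_abs _ _).trans <| Finset.sum_le_sum fun p hp ↦
          abs_primeTail_sub_ite_le (Nat.prime_of_mem_primesLE hp) (Nat.le_of_mem_primesLE hp)
    _ = 20 * (∑ p ∈ Nat.primesLE N, (p : ℝ) ^ (-(11 / 10) : ℝ)) * (N : ℝ) ^ (-(3 / 5) : ℝ) := by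
        rw [Finset.mul_sum, Finset.sum_mul]
    _ ≤ _ := by
        gcongr
        exact summable.sum_le_tsum _ fun n _ ↦ by positivity

end PrimePowers

section MainTerm

lemma one_div_succ_sub_le_sum_Ioc_inv_sq {M N : ℕ} (h : M ≤ N) :
    1 / ((M : ℝ) + 1) - 1 / ((N : ℝ) + 1) ≤ ∑ n ∈ Finset.Ioc M N, ((n : ℝ) ^ 2)⁻¹ := by
  induction N, h using Nat.le_induction with
  | base => simp
  | succ N h ih =>
    have : 1 / ((N : ℝ) + 1) - 1 / ((N : ℝ) + 1 + 1) ≤ (((N : ℝ) + 1) ^ 2)⁻¹ := by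
      rw [div_sub_div _ _ (by positivity) (by positivity), ← one_div,
        div_le_div_iff₀ (by positivity) (by positivity)]
      nlinarith [(Nat.cast_nonneg N : (0 : ℝ) ≤ N)]
    rw [Finset.sum_Ioc_succ_top h]
    push_cast
    linarith

lemma abs_sum_Ioc_sqrt_floor_inv_sq_sub_le {x : ℝ} (hx : 1 ≤ x) :
    |∑ n ∈ Finset.Ioc (Nat.sqrt ⌊x⌋₊) ⌊x⌋₊, ((n : ℝ) ^ 2)⁻¹ - 1 / √x| ≤ 5 / ⌊x⌋₊ := by
  set N := ⌊x⌋₊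
  set M := Nat.sqrt N
  have hN : 0 < N := Nat.floor_pos.mpr hx
  have hM : 0 < M := Nat.sqrt_pos.mpr hN
  have : (0 : ℝ) < N := by exact_mod_cast hN
  have : (0 : ℝ) < M := by exact_mod_cast hM
  have sum_le := sum_Ioc_inv_sq_le_sub (α := ℝ) hM.ne' N.sqrt_le_self
  have le_sum := one_div_succ_sub_le_sum_Ioc_inv_sq N.sqrt_le_self
  have M_le : (M : ℝ) ≤ √x := by
    refine Real.le_sqrt_of_sq_le (le_trans ?_ (Nat.floor_le (by linarith : 0 ≤ x)))
    exact_mod_cast Nat.sqrt_le' N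
  have le_M : √x ≤ M + 1 := by
    refine Real.sqrt_le_iff.mpr ⟨by positivity, (Nat.lt_floor_add_one x).le.trans ?_⟩
    exact_mod_cast Nat.lt_succ_sqrt' N
  have inv_le : 1 / √x ≤ (M : ℝ)⁻¹ := by
    rw [one_div]
    gcongr
  have le_inv : 1 / ((M : ℝ) + 1) ≤ 1 / √x := by gcongr
  have gap : (M : ℝ)⁻¹ - 1 / ((M : ℝ) + 1) ≤ 4 / N := by
    have N_le : (N : ℝ) ≤ 4 * (M * (M + 1)) := by
      exact_mod_cast (Nat.lt_succ_sqrt N).le.trans (by nlinarith)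
    calc _ = 1 / ((M : ℝ) * (M + 1)) := by field_simp; ring
      _ = 4 / (4 * (M * (M + 1))) := by field_simp
      _ ≤ 4 / N := by gcongr
  have tail : 1 / ((N : ℝ) + 1) ≤ 1 / N := by gcongr; linarith
  have : (5 : ℝ) / N = 4 / N + 1 / N := by ring
  have : 0 ≤ (N : ℝ)⁻¹ := by positivity
  have : 0 ≤ 1 / (N : ℝ) := by positivity
  rw [abs_le]
  constructor <;> linarith

lemma isBigO_rpow_neg_one_div_sqrt_mul_log_pow (A : ℕ) {r : ℝ} (hr : 1 / 2 < r) :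
    (fun x : ℝ ↦ x ^ (-r)) =O[atTop] fun x ↦ 1 / (√x * Real.log x ^ A) := by
  have log_pow : (fun x ↦ Real.log x ^ A) =O[atTop] fun x : ℝ ↦ x ^ (r - 1 / 2) := by
    simpa using (isLittleO_log_rpow_rpow_atTop (A : ℝ) (sub_pos.mpr hr)).isBigO
  have := (Asymptotics.isBigO_refl (fun x : ℝ ↦ x ^ (-r) / Real.log x ^ A) atTop).mul log_pow
  refine (this.congr' ?_ ?_)
  · filter_upwards [eventually_gt_atTop 1] with x hx
    have := Real.log_pos hx
    field_simp
  · filter_upwards [eventually_gt_atTop 1] with x hx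
    have hx0 : 0 < x := by linarith
    have := Real.log_pos hx
    rw [div_mul_eq_mul_div, ← Real.rpow_add hx0, show -r + (r - 1 / 2) = -(1 / 2) by ring,
      Real.rpow_neg hx0.le, ← Real.sqrt_eq_rpow]
    field_simp

lemma isBigO_one_div_sqrt_floor_mul_log_pow (A : ℕ) :
    (fun x : ℝ ↦ 1 / (√(⌊x⌋₊ : ℝ) * Real.log ⌊x⌋₊ ^ A)) =O[atTop]
      fun x ↦ 1 / (√x * Real.log x ^ A) := by
  refine Asymptotics.IsBigO.of_bound (2 * 2 ^ A) ?_
  filter_upwards [eventually_ge_atTop 2] with x hx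
  have hN : (2 : ℝ) ≤ ⌊x⌋₊ := by exact_mod_cast Nat.le_floor (by exact_mod_cast hx)
  have x_le : x ≤ ⌊x⌋₊ + 1 := (Nat.lt_floor_add_one x).le
  have hlog : 0 < Real.log x := Real.log_pos (by linarith)
  have hlogN : 0 < Real.log ⌊x⌋₊ := Real.log_pos (by linarith)
  have sqrt_le : √x / 2 ≤ √(⌊x⌋₊ : ℝ) := by
    rw [div_le_iff₀ two_pos, Real.sqrt_le_left (by positivity), mul_pow,
      Real.sq_sqrt (by positivity)]
    linarith
  have log_le : Real.log x / 2 ≤ Real.log ⌊x⌋₊ := by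
    have : Real.log x ≤ Real.log ((⌊x⌋₊ : ℝ) ^ 2) := by gcongr; nlinarith
    rw [Real.log_pow] at this
    push_cast at this
    linarith
  rw [Real.norm_of_nonneg (by positivity), Real.norm_of_nonneg (by positivity)]
  calc _ ≤ 1 / (√x / 2 * (Real.log x / 2) ^ A) := by gcongr
    _ = _ := by rw [div_pow]; field_simp

open ArithmeticFunction (vonMangoldt) in
lemma isBigO_Delta_natCast_sub_sum_Ioc_sqrt_inv_sq (A : ℕ) :
    (fun N : ℕ ↦ Delta N - ∑ n ∈ Finset.Ioc (Nat.sqrt N) N, ((n : ℝ) ^ 2)⁻¹) =O[atTop]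
      fun N ↦ 1 / (√(N : ℝ) * Real.log N ^ A) := by
  have rpow_neg {r : ℝ} (hr : 1 / 2 < r) :=
    (isBigO_rpow_neg_one_div_sqrt_mul_log_pow A hr).comp_tendsto
      (tendsto_natCast_atTop_atTop (R := ℝ))
  have primes := isBigO_Delta_natCast_sub_sum_Ioc_sqrt_prime.trans (rpow_neg (by norm_num))
  have not_prime :=
    isBigO_sum_Ioc_sqrt_not_prime_vonMangoldt_div_sq.trans (rpow_neg (by norm_num))
  refine ((primes.sub not_prime).add
    (isBigO_sum_Ioc_sqrt_vonMangoldt_sub_one_div_sq A)).congr_left fun N ↦ ?_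
  have split_primes := Finset.sum_filter_add_sum_filter_not (Finset.Ioc (Nat.sqrt N) N) Nat.Prime
    fun n ↦ vonMangoldt n / (n : ℝ) ^ 2
  have sum_prime : ∑ n ∈ Finset.Ioc (Nat.sqrt N) N with n.Prime, vonMangoldt n / (n : ℝ) ^ 2 =
      ∑ p ∈ Finset.Ioc (Nat.sqrt N) N with p.Prime, Real.log p / (p : ℝ) ^ 2 :=
    Finset.sum_congr rfl fun p hp ↦ by
      rw [ArithmeticFunction.vonMangoldt_apply_prime (Finset.mem_filter.mp hp).2]
  simp only [sub_div, Finset.sum_sub_distrib, one_div]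
  linarith

end MainTerm

theorem Delta_asymp_general (A : ℕ) :
    (fun x ↦ Delta x - 1 / √x) =O[atTop] fun x ↦ 1 / (√x * Real.log x ^ A) := by
  have at_floor := ((isBigO_Delta_natCast_sub_sum_Ioc_sqrt_inv_sq A).comp_tendsto
    (tendsto_nat_floor_atTop (α := ℝ))).trans (isBigO_one_div_sqrt_floor_mul_log_pow A)
  have main_term : (fun x : ℝ ↦ ∑ n ∈ Finset.Ioc (Nat.sqrt ⌊x⌋₊) ⌊x⌋₊, ((n : ℝ) ^ 2)⁻¹ - 1 / √x)
      =O[atTop] fun x ↦ 1 / (√x * Real.log x ^ A) := by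
    refine .trans (.of_bound 10 ?_) (isBigO_rpow_neg_one_div_sqrt_mul_log_pow A one_half_lt_one)
    filter_upwards [eventually_ge_atTop 1] with x hx
    have half_le : x / 2 ≤ ⌊x⌋₊ := by
      have : (1 : ℝ) ≤ ⌊x⌋₊ := by exact_mod_cast Nat.floor_pos.mpr hx
      linarith [Nat.lt_floor_add_one x]
    calc _ ≤ 5 / (⌊x⌋₊ : ℝ) := abs_sum_Ioc_sqrt_floor_inv_sq_sub_le hx
      _ ≤ 5 / (x / 2) := by gcongr
      _ = _ := by
        rw [Real.rpow_neg_one, Real.norm_of_nonneg (by positivity)]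
        field_simp
        norm_num
  refine (at_floor.add main_term).congr_left fun x ↦ ?_
  have : Delta ⌊x⌋₊ = Delta x := by simp [Delta]
  simp [this]

/-- `Δ(x) = 1/√x + O(1/(√x (log x)^3))`. -/
theorem Delta_asymp :
    ∃ C x₀ : ℝ, 2 ≤ x₀ ∧ ∀ x : ℝ, x₀ ≤ x →
      |Delta x - 1 / Real.sqrt x| ≤ C / (Real.sqrt x * (Real.log x) ^ 3) := by
  obtain ⟨C, hC⟩ := (Delta_asymp_general 3).bound
  obtain ⟨x₀, hx₀⟩ := eventually_atTop.mp hC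
  refine ⟨C, max 2 x₀, le_max_left _ _, fun x hx ↦ ?_⟩
  have hlog : 0 ≤ Real.log x := Real.log_nonneg (by linarith [le_of_max_le_left hx])
  simpa [abs_of_nonneg hlog, abs_of_nonneg (Real.sqrt_nonneg x), div_eq_mul_inv] using
    hx₀ x (le_of_max_le_right hx)
end

section
/- For all x ≥ 2, Σ_{n ≤ x} Λ(n)/(n·log n) = log log x + γ + R(x)/log x − ∫_x^∞ R(t)/(t·(log t)²) dt, where the improper integral converges absolutely. -/
open Filter

/-- `R(x) = ∑_{n ≤ x} Λ(n)/n - log x + γ`. -/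
noncomputable def Rfun (x : ℝ) : ℝ :=
  (∑ n ∈ Finset.Icc 1 ⌊x⌋₊, ArithmeticFunction.vonMangoldt n / n) -
    Real.log x + Real.eulerMascheroniConstant

/-!
Abel summation against `1 / log t` expresses the increments of `∑_{n ≤ x} Λ(n)/(n log n)` through
`R`. As `R` is bounded (Mertens), letting the upper end tend to infinity gives the identity up to
the value of `lim (∑_{n ≤ x} Λ(n)/(n log n) - log log x)`.

To see that this limit is `γ`, compare `∑_{log n ≤ v} Λ(n)/(n log n)` with the harmonic sum
`∑_{k ≤ v} 1/k = log v + γ + o(1)`. They are the summatory functions of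
`∑ Λ(n)/(n log n) * n^(-δ) = log ζ(1 + δ)` and `∑ e^(-δk)/k = -log (1 - e^(-δ))`, whose difference
tends to `0` as `δ → 0⁺` because `ζ` has a simple pole with residue `1`. By Abel's theorem for
general Dirichlet series, the difference of the summatory functions tends to `0` too.
-/

open MeasureTheory ArithmeticFunction Topology

section MertensFirstTheorem

theorem sum_vonMangoldt_mul_natDiv (N : ℕ) :
    ∑ n ∈ Finset.Icc 1 N, Λ n * ((N / n : ℕ) : ℝ) = Real.log N.factorial := by
  rw [← zero_add 1, Finset.Icc_add_one_left_eq_Ioc, ← sum_Ioc_mul_zeta_eq_sum,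
    vonMangoldt_mul_zeta]
  induction N with
  | zero => simp
  | succ n ih =>
    rw [← Finset.insert_Ioc_right_eq_Ioc_add_one n.zero_le, Finset.sum_insert (by simp), ih,
      Nat.factorial_succ, Nat.cast_mul, Real.log_mul (by positivity) (by positivity), log_apply]

theorem log_factorial_le_mul_sum_vonMangoldt_div (N : ℕ) :
    Real.log N.factorial ≤ N * ∑ n ∈ Finset.Icc 1 N, Λ n / n := by
  rw [← sum_vonMangoldt_mul_natDiv, Finset.mul_sum]
  refine Finset.sum_le_sum fun n _ ↦ ?_
  calc Λ n * ((N / n : ℕ) : ℝ) ≤ Λ n * ((N : ℝ) / n) :=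
        mul_le_mul_of_nonneg_left Nat.cast_div_le vonMangoldt_nonneg
    _ = N * (Λ n / n) := by ring

theorem mul_sum_vonMangoldt_div_le_log_factorial_add_psi (N : ℕ) :
    N * ∑ n ∈ Finset.Icc 1 N, Λ n / n ≤ Real.log N.factorial + Chebyshev.psi N := by
  rw [← sum_vonMangoldt_mul_natDiv, Finset.mul_sum, Chebyshev.psi, Nat.floor_natCast,
    ← Finset.Icc_add_one_left_eq_Ioc, zero_add, ← Finset.sum_add_distrib]
  refine Finset.sum_le_sum fun n _ ↦ ?_
  have hdiv : (N : ℝ) / n ≤ ((N / n : ℕ) : ℝ) + 1 := by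
    rw [← Nat.floor_div_eq_div (K := ℝ)]
    exact (Nat.lt_floor_add_one _).le
  calc (N : ℝ) * (Λ n / n) = Λ n * ((N : ℝ) / n) := by ring
    _ ≤ Λ n * (((N / n : ℕ) : ℝ) + 1) := mul_le_mul_of_nonneg_left hdiv vonMangoldt_nonneg
    _ = Λ n * ((N / n : ℕ) : ℝ) + Λ n := by ring

theorem natCast_mul_log_sub_self_le_log_factorial (N : ℕ) :
    N * Real.log N - N ≤ Real.log N.factorial := by
  rcases eq_or_ne N 0 with rfl | hN
  · simp
  have hπ : 0 ≤ Real.log (2 * Real.pi) := Real.log_nonneg (by linarith [Real.pi_gt_three])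
  linarith [Stirling.le_log_factorial_stirling hN, Real.log_natCast_nonneg N]

theorem log_factorial_le_natCast_mul_log (N : ℕ) :
    Real.log N.factorial ≤ N * Real.log N := by
  rw [← Real.log_pow]
  exact Real.log_le_log (by positivity) (by exact_mod_cast N.factorial_le_pow)

theorem sum_vonMangoldt_div_mem_Icc {N : ℕ} (hN : N ≠ 0) :
    ∑ n ∈ Finset.Icc 1 N, Λ n / n ∈
      Set.Icc (Real.log N - 1) (Real.log N + (Real.log 4 + 4)) := by
  have hN' : (0 : ℝ) < N := by positivity
  constructor
  · refine le_of_mul_le_mul_left ?_ hN'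
    linarith [natCast_mul_log_sub_self_le_log_factorial N,
      log_factorial_le_mul_sum_vonMangoldt_div N]
  · refine le_of_mul_le_mul_left ?_ hN'
    linarith [mul_sum_vonMangoldt_div_le_log_factorial_add_psi N,
      log_factorial_le_natCast_mul_log N, Chebyshev.psi_le_const_mul_self hN'.le]

theorem abs_sum_vonMangoldt_div_sub_log_le {x : ℝ} (hx : 1 ≤ x) :
    |∑ n ∈ Finset.Icc 1 ⌊x⌋₊, Λ n / n - Real.log x| ≤ Real.log 4 + 4 := by
  have hN : 1 ≤ ⌊x⌋₊ := (Nat.one_le_floor_iff x).mpr hx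
  have hN' : (1 : ℝ) ≤ ⌊x⌋₊ := by exact_mod_cast hN
  have hlog_le : Real.log ⌊x⌋₊ ≤ Real.log x :=
    Real.log_le_log (by linarith) (Nat.floor_le (by linarith))
  have hle_log : Real.log x ≤ Real.log 2 + Real.log ⌊x⌋₊ := by
    rw [← Real.log_mul two_ne_zero (by linarith)]
    exact Real.log_le_log (by linarith) (by linarith [Nat.lt_floor_add_one x])
  have hlog_two : Real.log 2 ≤ Real.log 4 := Real.log_le_log two_pos (by norm_num)
  obtain ⟨hlower, hupper⟩ := sum_vonMangoldt_div_mem_Icc (Nat.one_le_iff_ne_zero.mp hN)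
  rw [abs_le]
  constructor <;> linarith

end MertensFirstTheorem

section Remainder

theorem abs_Rfun_le {x : ℝ} (hx : 1 ≤ x) :
    |Rfun x| ≤ Real.log 4 + 4 + |Real.eulerMascheroniConstant| :=
  (abs_add_le _ _).trans (add_le_add_left (abs_sum_vonMangoldt_div_sub_log_le hx) _)

theorem measurable_Rfun : Measurable Rfun := by
  have hsum : Measurable fun x : ℝ ↦ ∑ n ∈ Finset.Icc 1 ⌊x⌋₊, Λ n / (n : ℝ) :=
    (measurable_from_nat (f := fun N ↦ ∑ n ∈ Finset.Icc 1 N, Λ n / (n : ℝ))).comp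
      Nat.measurable_floor
  exact (hsum.sub Real.measurable_log).add_const _

theorem integrableOn_Rfun_div {x : ℝ} (hx : 1 < x) :
    IntegrableOn (fun t : ℝ ↦ Rfun t / (t * Real.log t ^ 2)) (Set.Ioi x) := by
  simp only [div_eq_mul_inv]
  refine ((integrableOn_inv_div_log_sq_Ioi hx).congr_fun (fun t _ ↦ ?_) measurableSet_Ioi).bdd_mul
    (c := Real.log 4 + 4 + |Real.eulerMascheroniConstant|)
    measurable_Rfun.aestronglyMeasurable ?_
  · simp [field]
  · filter_upwards [ae_restrict_mem measurableSet_Ioi] with t ht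
    exact abs_Rfun_le (hx.trans ht).le

theorem tendsto_Rfun_div_log : Tendsto (fun x ↦ Rfun x / Real.log x) atTop (𝓝 0) := by
  have hbdd : IsBoundedUnder (· ≤ ·) atTop (norm ∘ Rfun) :=
    isBoundedUnder_of_eventually_le ((eventually_ge_atTop 1).mono fun _ hx ↦ abs_Rfun_le hx)
  simpa only [Pi.inv_apply, div_eq_inv_mul] using
    Real.tendsto_log_atTop.inv_tendsto_atTop.zero_mul_isBoundedUnder_le hbdd

end Remainder

section AbelSummation

/-- The sum `∑_{2 ≤ n ≤ x} Λ(n)/(n log n)`, that is `∑ 1/(k p^k)` over the prime powers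
`p ^ k ≤ x`. It is the summatory function of `log ζ(1 + δ)` as a Dirichlet series in `δ`. -/
noncomputable def mertensSum (x : ℝ) : ℝ :=
  ∑ n ∈ Finset.Icc 2 ⌊x⌋₊, Λ n / (n * Real.log n)

theorem sum_Icc_zero_vonMangoldt_div (x : ℝ) :
    ∑ n ∈ Finset.Icc 0 ⌊x⌋₊, Λ n / (n : ℝ) =
      Rfun x + Real.log x - Real.eulerMascheroniConstant := by
  rw [Finset.Icc_eq_cons_Ioc (Nat.zero_le _), Finset.sum_cons,
    ← Finset.Icc_add_one_left_eq_Ioc, Rfun, Nat.cast_zero, div_zero, zero_add, zero_add]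
  ring

theorem mertensSum_sub_eq_sum_Ioc {x y : ℝ} (hx : 1 ≤ x) (hxy : x ≤ y) :
    mertensSum y - mertensSum x =
      ∑ n ∈ Finset.Ioc ⌊x⌋₊ ⌊y⌋₊, (Real.log n)⁻¹ * (Λ n / n) := by
  simp only [mertensSum, ← one_add_one_eq_two, Finset.Icc_add_one_left_eq_Ioc]
  rw [← Finset.sum_Ioc_consecutive _ ((Nat.one_le_floor_iff x).mpr hx) (Nat.floor_mono hxy),
    add_sub_cancel_left]
  exact Finset.sum_congr rfl fun n _ ↦ by ring

theorem hasDerivAt_log_log_add_const_div_log (c : ℝ) {t : ℝ} (ht : 1 < t) :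
    HasDerivAt (fun t ↦ Real.log (Real.log t) + c / Real.log t)
      ((Real.log t - c) / (t * Real.log t ^ 2)) t := by
  have ht0 : t ≠ 0 := by positivity
  have hlog : Real.log t ≠ 0 := (Real.log_pos ht).ne'
  have hderiv := ((Real.hasDerivAt_log ht0).log hlog).add
    (((Real.hasDerivAt_log ht0).fun_inv hlog).const_mul c)
  refine hderiv.congr_deriv ?_
  field_simp
  ring

theorem continuousOn_div_mul_log_sq {g : ℝ → ℝ} {s : Set ℝ} (hg : ContinuousOn g s)
    (hs : ∀ t ∈ s, 1 < t) : ContinuousOn (fun t ↦ g t / (t * Real.log t ^ 2)) s := by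
  have hs0 : ∀ t ∈ s, t ≠ 0 := fun t ht ↦ (zero_lt_one.trans (hs t ht)).ne'
  exact hg.div (continuousOn_id.mul ((Real.continuousOn_log.mono hs0).pow 2)) fun t ht ↦
    mul_ne_zero (hs0 t ht) (pow_ne_zero 2 (Real.log_pos (hs t ht)).ne')

theorem sum_Ioc_inv_log_mul_eq {x y : ℝ} (c : ℕ → ℝ) (hx : 1 < x) (hxy : x ≤ y) :
    ∑ n ∈ Finset.Ioc ⌊x⌋₊ ⌊y⌋₊, (Real.log n)⁻¹ * c n =
      (∑ n ∈ Finset.Icc 0 ⌊y⌋₊, c n) / Real.log y - (∑ n ∈ Finset.Icc 0 ⌊x⌋₊, c n) / Real.log x +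
        ∫ t in x..y, (∑ n ∈ Finset.Icc 0 ⌊t⌋₊, c n) / (t * Real.log t ^ 2) := by
  have hone_lt (t : ℝ) (ht : t ∈ Set.Icc x y) : 1 < t := hx.trans_le ht.1
  have hderiv (t : ℝ) : deriv (fun t ↦ (Real.log t)⁻¹) t = -1 / (t * Real.log t ^ 2) := by
    rw [Real.deriv_inv_log_apply]
    ring
  have hint : IntegrableOn (deriv fun t ↦ (Real.log t)⁻¹) (Set.Icc x y) := by
    rw [funext hderiv]
    exact (continuousOn_div_mul_log_sq continuousOn_const hone_lt).integrableOn_Icc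
  rw [sum_mul_eq_sub_sub_integral_mul c (by linarith) hxy
    (fun t ht ↦ Real.differentiableOn_inv_log.differentiableAt (Ioi_mem_nhds (hone_lt t ht))) hint,
    ← intervalIntegral.integral_of_le hxy, sub_eq_add_neg _ (intervalIntegral _ _ _ _),
    ← intervalIntegral.integral_neg]
  simp only [hderiv]
  congr 1
  · ring
  · exact intervalIntegral.integral_congr fun t _ ↦ by ring

theorem mertensSum_sub_mertensSum {x y : ℝ} (hx : 1 < x) (hxy : x ≤ y) :
    mertensSum y - mertensSum x =
      (Real.log (Real.log y) + Rfun y / Real.log y) -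
        (Real.log (Real.log x) + Rfun x / Real.log x) +
          ∫ t in x..y, Rfun t / (t * Real.log t ^ 2) := by
  set γ := Real.eulerMascheroniConstant
  have hone_lt (t : ℝ) (ht : t ∈ Set.uIcc x y) : 1 < t := by
    rw [Set.uIcc_of_le hxy] at ht
    exact hx.trans_le ht.1
  have hRint : IntervalIntegrable (fun t ↦ Rfun t / (t * Real.log t ^ 2)) volume x y :=
    (intervalIntegrable_iff_integrableOn_Ioc_of_le hxy).mpr
      ((integrableOn_Rfun_div hx).mono_set Set.Ioc_subset_Ioi_self)
  have hlogint : IntervalIntegrable (fun t ↦ (Real.log t - γ) / (t * Real.log t ^ 2))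
      volume x y :=
    (continuousOn_div_mul_log_sq ((Real.continuousOn_log.mono fun t ht ↦
      (zero_lt_one.trans (hone_lt t ht)).ne').sub continuousOn_const) hone_lt).intervalIntegrable
  have hlogval := intervalIntegral.integral_eq_sub_of_hasDerivAt
    (fun t ht ↦ hasDerivAt_log_log_add_const_div_log γ (hone_lt t ht)) hlogint
  have hlog_x : Real.log x ≠ 0 := (Real.log_pos hx).ne'
  have hlog_y : Real.log y ≠ 0 := (Real.log_pos (hx.trans_le hxy)).ne'
  rw [mertensSum_sub_eq_sum_Ioc hx.le hxy, sum_Ioc_inv_log_mul_eq _ hx hxy]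
  simp only [sum_Icc_zero_vonMangoldt_div, add_sub_assoc, add_div]
  rw [intervalIntegral.integral_add hRint hlogint, hlogval]
  field_simp
  ring

theorem tendsto_mertensSum_sub_log_log {x : ℝ} (hx : 1 < x) :
    Tendsto (fun y ↦ mertensSum y - Real.log (Real.log y)) atTop
      (𝓝 (mertensSum x - Real.log (Real.log x) - Rfun x / Real.log x +
        ∫ t in Set.Ioi x, Rfun t / (t * Real.log t ^ 2))) := by
  have hint := intervalIntegral_tendsto_integral_Ioi x (integrableOn_Rfun_div hx) tendsto_id
  have hlim := (tendsto_Rfun_div_log.add hint).const_add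
    (mertensSum x - Real.log (Real.log x) - Rfun x / Real.log x)
  rw [zero_add] at hlim
  refine hlim.congr' ?_
  filter_upwards [eventually_ge_atTop x] with y hy
  simp only [id]
  linarith [mertensSum_sub_mertensSum hx hy]

end AbelSummation

section LogZeta

theorem hasSum_primes_prod_nat {M : Type*} [AddCommMonoid M] [TopologicalSpace M] {f : ℕ → M}
    {a : M} (hf : Function.support f ⊆ {n | IsPrimePow n}) (ha : HasSum f a) :
    HasSum (fun q : Nat.Primes × ℕ ↦ f ((q.1 : ℕ) ^ (q.2 + 1))) a :=
  Nat.Primes.prodNatEquiv.hasSum_iff.mpr ((hasSum_subtype_iff_of_support_subset hf).mpr ha)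

theorem vonMangoldt_div_log_prime_pow {p : ℕ} (hp : p.Prime) (k : ℕ) :
    Λ (p ^ (k + 1)) / Real.log ((p ^ (k + 1) : ℕ) : ℝ) = ((k : ℝ) + 1)⁻¹ := by
  have hlog : Real.log p ≠ 0 := (Real.log_pos (by exact_mod_cast hp.one_lt)).ne'
  rw [vonMangoldt_apply_pow k.succ_ne_zero, vonMangoldt_apply_prime hp, Nat.cast_pow, Real.log_pow]
  push_cast
  field_simp

variable {f : ℕ →*₀ ℝ}

theorem summable_vonMangoldt_div_log_mul (hf : Summable f) :
    Summable fun n : ℕ ↦ Λ n / Real.log n * f n := by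
  refine hf.norm.of_norm_bounded fun n ↦ ?_
  rw [norm_mul, Real.norm_of_nonneg (div_nonneg vonMangoldt_nonneg (Real.log_natCast_nonneg n))]
  exact mul_le_of_le_one_left (norm_nonneg _)
    (div_le_one_of_le₀ vonMangoldt_le_log (Real.log_natCast_nonneg n))

theorem hasSum_neg_log_one_sub_primes (hf : Summable f) :
    HasSum (fun p : Nat.Primes ↦ -Real.log (1 - f p)) (∑' n : ℕ, Λ n / Real.log n * f n) := by
  have hsupp : Function.support (fun n : ℕ ↦ Λ n / Real.log n * f n) ⊆ {n | IsPrimePow n} :=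
    fun n hn ↦ vonMangoldt_ne_zero_iff.mp (by aesop)
  have hprod := hasSum_primes_prod_nat hsupp (summable_vonMangoldt_div_log_mul hf).hasSum
  refine hprod.prod_fiberwise fun p ↦ ?_
  refine (Real.hasSum_pow_div_log_of_abs_lt_one
    (hf.norm_lt_one (f := f.toMonoidHom) p.prop.one_lt)).congr_fun fun k ↦ ?_
  simp only [vonMangoldt_div_log_prime_pow p.prop, map_pow]
  exact (div_eq_inv_mul _ _).symm

theorem hasSum_vonMangoldt_div_log_mul (hf : Summable f) :
    HasSum (fun n : ℕ ↦ Λ n / Real.log n * f n) (Real.log (∑' n, f n)) := by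
  have hpos (p : Nat.Primes) : 0 < (1 - f p)⁻¹ :=
    inv_pos.mpr (sub_pos.mpr
      ((le_abs_self _).trans_lt (hf.norm_lt_one (f := f.toMonoidHom) p.prop.one_lt)))
  have hlog := hasSum_neg_log_one_sub_primes hf
  simp only [← Real.log_inv] at hlog
  have heuler : ∑' n, f n = Real.exp (∑' n : ℕ, Λ n / Real.log n * f n) := by
    rw [← (EulerProduct.eulerProduct_completely_multiplicative_hasProd hf.norm).tprod_eq,
      ← Real.rexp_tsum_eq_tprod hpos hlog.summable, hlog.tsum_eq]
  rw [heuler, Real.log_exp]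
  exact (summable_vonMangoldt_div_log_mul hf).hasSum

/-- The completely multiplicative function `n ↦ n ^ (-s)`, whose sum is `ζ(s)`. The exponent must
be nonzero for the value at `0` to be `0`. -/
noncomputable def rpowNegHom {s : ℝ} (hs : s ≠ 0) : ℕ →*₀ ℝ where
  toFun n := (n : ℝ) ^ (-s)
  map_zero' := by simp [hs]
  map_one' := by simp
  map_mul' m n := by simp [Real.mul_rpow]

theorem hasSum_vonMangoldt_div_mul_log_mul_exp {δ : ℝ} (hδ : 0 < δ) :
    HasSum (fun n : ℕ ↦ Λ n / (n * Real.log n) * Real.exp (-δ * Real.log n))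
      (Real.log (∑' n : ℕ, 1 / (n : ℝ) ^ (1 + δ))) := by
  have hs : 1 + δ ≠ 0 := by positivity
  have hsummable : Summable (rpowNegHom hs) := Real.summable_nat_rpow.mpr (by linarith)
  have hζ : ∑' n, rpowNegHom hs n = ∑' n : ℕ, 1 / (n : ℝ) ^ (1 + δ) :=
    tsum_congr fun n ↦ by rw [one_div, ← Real.rpow_neg n.cast_nonneg]; rfl
  rw [← hζ]
  refine (hasSum_vonMangoldt_div_log_mul hsummable).congr_fun fun n ↦ ?_
  rcases n.eq_zero_or_pos with rfl | hn
  · simp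
  have hn' : (0 : ℝ) < n := by exact_mod_cast hn
  have hpow : rpowNegHom hs n = (n : ℝ)⁻¹ * Real.exp (-δ * Real.log n) := by
    change (n : ℝ) ^ (-(1 + δ)) = _
    rw [neg_add, Real.rpow_add hn', Real.rpow_neg_one, Real.rpow_def_of_pos hn', mul_comm (-δ)]
  rw [hpow]
  ring

end LogZeta

section GeneralDirichletSeries

variable {ι : Type*} {c τ : ι → ℝ} {F : ℝ → ℝ}

theorem abs_ite_le_mul_exp {a t v : ℝ} :
    |if t ≤ v then a else 0| ≤ Real.exp v * |a * Real.exp (-1 * t)| := by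
  split_ifs with h
  · rw [abs_mul, Real.abs_exp, mul_left_comm, ← Real.exp_add]
    exact le_mul_of_one_le_right (abs_nonneg a) (Real.one_le_exp (by linarith))
  · simp only [abs_zero]
    positivity

theorem exists_abs_le_of_hasSum_ite {L : ℝ}
    (hc : Summable fun i ↦ c i * Real.exp (-1 * τ i))
    (hF : ∀ v, HasSum (fun i ↦ if τ i ≤ v then c i else 0) (F v))
    (hL : Tendsto F atTop (𝓝 L)) : ∃ C, ∀ v, |F v| ≤ C := by
  obtain ⟨V, hV⟩ := eventually_atTop.mp (hL.abs.eventually_le_const (lt_add_one |L|))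
  set B := ∑' i, |c i * Real.exp (-1 * τ i)|
  have hB : 0 ≤ B := tsum_nonneg fun i ↦ abs_nonneg _
  refine ⟨max (|L| + 1) (Real.exp V * B), fun v ↦ ?_⟩
  rcases le_total V v with h | h
  · exact (hV v h).trans (le_max_left _ _)
  · calc |F v| ≤ Real.exp v * B :=
          (hF v).norm_le_of_bounded (hc.abs.hasSum.mul_left _) fun i ↦ abs_ite_le_mul_exp
      _ ≤ Real.exp V * B := mul_le_mul_of_nonneg_right (Real.exp_le_exp.mpr h) hB
      _ ≤ _ := le_max_right _ _

theorem measurable_of_hasSum_ite [Countable ι]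
    (hF : ∀ v, HasSum (fun i ↦ if τ i ≤ v then c i else 0) (F v)) : Measurable F :=
  measurable_of_tendsto_metrizable' atTop
    (fun s ↦ Finset.measurable_fun_sum s fun _ _ ↦
      Measurable.ite measurableSet_Ici measurable_const measurable_const)
    (tendsto_pi_nhds.mpr hF)

theorem ite_mul_exp_eq_indicator (a t δ v : ℝ) :
    (if t ≤ v then a else 0) * Real.exp (-δ * v) =
      (Set.Ici t).indicator (fun v ↦ a * Real.exp (-δ * v)) v := by
  by_cases h : t ≤ v <;> simp [h]

theorem integrableOn_ite_mul_exp {δ : ℝ} (hδ : 0 < δ) (a t : ℝ) :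
    IntegrableOn (fun v ↦ (if t ≤ v then a else 0) * Real.exp (-δ * v)) (Set.Ioi 0) := by
  simp only [ite_mul_exp_eq_indicator]
  exact ((integrableOn_exp_mul_Ioi (neg_neg_of_pos hδ) 0).const_mul a).indicator measurableSet_Ici

theorem integral_ite_mul_exp {δ t : ℝ} (hδ : 0 < δ) (ht : 0 ≤ t) (a : ℝ) :
    ∫ v in Set.Ioi 0, (if t ≤ v then a else 0) * Real.exp (-δ * v) =
      δ⁻¹ * (a * Real.exp (-δ * t)) := by
  simp only [ite_mul_exp_eq_indicator]
  rw [← integral_Ici_eq_integral_Ioi, setIntegral_indicator measurableSet_Ici, Set.Ici_inter_Ici,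
    sup_of_le_right ht, integral_Ici_eq_integral_Ioi, integral_const_mul,
    integral_exp_mul_Ioi (neg_neg_of_pos hδ)]
  field_simp

theorem hasSum_mul_exp_neg_mul [Countable ι] {δ : ℝ} (hδ : 0 < δ) (hτ : ∀ i, 0 ≤ τ i)
    (hc : Summable fun i ↦ c i * Real.exp (-δ * τ i))
    (hF : ∀ v, HasSum (fun i ↦ if τ i ≤ v then c i else 0) (F v)) :
    HasSum (fun i ↦ c i * Real.exp (-δ * τ i))
      (δ * ∫ v in Set.Ioi 0, F v * Real.exp (-δ * v)) := by
  have hnorm (i : ι) (v : ℝ) : ‖(if τ i ≤ v then c i else 0) * Real.exp (-δ * v)‖ =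
      (if τ i ≤ v then |c i| else 0) * Real.exp (-δ * v) := by
    split_ifs <;> simp
  have hsum := hasSum_integral_of_summable_integral_norm
    (fun i ↦ integrableOn_ite_mul_exp hδ (c i) (τ i)) (by
      simp only [hnorm, integral_ite_mul_exp hδ (hτ _)]
      simpa only [abs_mul, Real.abs_exp] using hc.abs.mul_left δ⁻¹)
  simp only [integral_ite_mul_exp hδ (hτ _), tsum_mul_right, (hF _).tsum_eq] at hsum
  simpa only [mul_inv_cancel_left₀ hδ.ne'] using hsum.mul_left δ

theorem mul_integral_mul_exp_neg_eq {δ : ℝ} (hδ : 0 < δ) (F : ℝ → ℝ) :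
    δ * ∫ v in Set.Ioi 0, F v * Real.exp (-δ * v) =
      ∫ u in Set.Ioi 0, F (δ⁻¹ * u) * Real.exp (-u) := by
  have h := integral_comp_mul_left_Ioi (fun u ↦ F (δ⁻¹ * u) * Real.exp (-u)) 0 hδ
  simp only [inv_mul_cancel_left₀ hδ.ne', mul_zero, smul_eq_mul] at h
  simp only [neg_mul]
  rw [h, mul_inv_cancel_left₀ hδ.ne']

theorem tendsto_mul_integral_mul_exp_neg {L C : ℝ} (hF : Measurable F) (hC : ∀ v, |F v| ≤ C)
    (hL : Tendsto F atTop (𝓝 L)) :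
    Tendsto (fun δ : ℝ ↦ δ * ∫ v in Set.Ioi 0, F v * Real.exp (-δ * v)) (𝓝[>] 0) (𝓝 L) := by
  have hlim : Tendsto (fun δ : ℝ ↦ ∫ u in Set.Ioi 0, F (δ⁻¹ * u) * Real.exp (-u)) (𝓝[>] 0)
      (𝓝 (∫ u in Set.Ioi 0, L * Real.exp (-u))) := by
    refine tendsto_integral_filter_of_dominated_convergence (fun u ↦ C * Real.exp (-u)) ?_ ?_
      ((integrableOn_exp_neg_Ioi 0).const_mul C) ?_
    · exact Eventually.of_forall fun δ ↦ ((hF.comp (measurable_const_mul _)).mul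
        (Real.measurable_exp.comp measurable_neg)).aestronglyMeasurable
    · refine Eventually.of_forall fun δ ↦ ae_of_all _ fun u ↦ ?_
      rw [norm_mul, Real.norm_eq_abs, Real.norm_of_nonneg (Real.exp_pos _).le]
      exact mul_le_mul_of_nonneg_right (hC _) (Real.exp_pos _).le
    · filter_upwards [ae_restrict_mem measurableSet_Ioi] with u hu
      exact (hL.comp (tendsto_inv_nhdsGT_zero.atTop_mul_const hu)).mul_const _
  rw [integral_const_mul, integral_exp_neg_Ioi_zero, mul_one] at hlim
  refine hlim.congr' ?_
  filter_upwards [self_mem_nhdsWithin] with δ hδ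
  exact (mul_integral_mul_exp_neg_eq hδ F).symm

theorem tendsto_of_hasSum_mul_exp_neg_mul [Countable ι] {A : ℝ → ℝ} {L : ℝ} (hτ : ∀ i, 0 ≤ τ i)
    (hA : ∀ δ > 0, HasSum (fun i ↦ c i * Real.exp (-δ * τ i)) (A δ))
    (hF : ∀ v, HasSum (fun i ↦ if τ i ≤ v then c i else 0) (F v))
    (hL : Tendsto F atTop (𝓝 L)) : Tendsto A (𝓝[>] 0) (𝓝 L) := by
  obtain ⟨C, hC⟩ := exists_abs_le_of_hasSum_ite (hA 1 one_pos).summable hF hL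
  refine (tendsto_mul_integral_mul_exp_neg (measurable_of_hasSum_ite hF) hC hL).congr' ?_
  filter_upwards [self_mem_nhdsWithin] with δ hδ
  exact (hasSum_mul_exp_neg_mul hδ hτ (hA δ hδ).summable hF).unique (hA δ hδ)

end GeneralDirichletSeries

section MertensConstant

theorem tendsto_harmonic_floor_sub_log :
    Tendsto (fun v : ℝ ↦ (harmonic ⌊v⌋₊ : ℝ) - Real.log v) atTop
      (𝓝 Real.eulerMascheroniConstant) := by
  have hharm := Real.tendsto_harmonic_sub_log.comp (tendsto_nat_floor_atTop (α := ℝ))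
  have hratio := (tendsto_nat_floor_div_atTop (R := ℝ)).log one_ne_zero
  have hlim := hharm.add hratio
  rw [Real.log_one, add_zero] at hlim
  refine hlim.congr' ?_
  filter_upwards [eventually_ge_atTop 1] with v hv
  have hfloor : (⌊v⌋₊ : ℝ) ≠ 0 := by
    exact_mod_cast Nat.one_le_iff_ne_zero.mp ((Nat.one_le_floor_iff v).mpr hv)
  rw [Function.comp_apply, Real.log_div hfloor (by positivity)]
  ring

theorem hasSum_ite_of_mem_iff {ι : Type*} {c τ : ι → ℝ} {v : ℝ} (s : Finset ι)
    (hs : ∀ i, c i ≠ 0 → (i ∈ s ↔ τ i ≤ v)) :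
    HasSum (fun i ↦ if τ i ≤ v then c i else 0) (∑ i ∈ s, c i) := by
  classical
  have hterm (i : ι) : (if τ i ≤ v then c i else 0) = (s : Set ι).indicator c i := by
    rcases eq_or_ne (c i) 0 with hi | hi
    · simp only [hi, ite_self, Set.indicator_apply]
    · simp only [← hs i hi, Set.indicator_apply, Finset.mem_coe]
  simp only [hterm]
  exact hasSum_subtype_iff_indicator.mp (s.hasSum c)

theorem hasSum_ite_log_le_mertensSum (v : ℝ) :
    HasSum (fun n : ℕ ↦ if Real.log n ≤ v then Λ n / (n * Real.log n) else 0)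
      (mertensSum (Real.exp v)) := by
  refine hasSum_ite_of_mem_iff _ fun n hn ↦ ?_
  have hn2 : 2 ≤ n := by
    by_contra! h
    interval_cases n <;> simp at hn
  rw [Finset.mem_Icc, Nat.le_floor_iff (Real.exp_pos v).le,
    Real.log_le_iff_le_exp (by positivity)]
  exact and_iff_right hn2

theorem hasSum_ite_natCast_le_harmonic (v : ℝ) :
    HasSum (fun k : ℕ ↦ if (k : ℝ) ≤ v then -(k : ℝ)⁻¹ else 0) (-(harmonic ⌊v⌋₊ : ℝ)) := by
  rw [harmonic_eq_sum_Icc]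
  push_cast
  rw [← Finset.sum_neg_distrib]
  refine hasSum_ite_of_mem_iff _ fun k hk ↦ ?_
  have hk0 : k ≠ 0 := by aesop
  rw [Finset.mem_Icc, Nat.le_floor_iff' hk0]
  exact and_iff_right (Nat.one_le_iff_ne_zero.mpr hk0)

theorem hasSum_inv_mul_exp_neg {δ : ℝ} (hδ : 0 < δ) :
    HasSum (fun k : ℕ ↦ (k : ℝ)⁻¹ * Real.exp (-δ * k)) (-Real.log (1 - Real.exp (-δ))) := by
  have hexp : |Real.exp (-δ)| < 1 := by
    rw [Real.abs_exp]
    exact Real.exp_lt_one_iff.mpr (neg_neg_of_pos hδ)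
  refine (hasSum_nat_add_iff' 1).mp ?_
  simp only [Finset.range_one, Finset.sum_singleton, Nat.cast_zero, inv_zero, zero_mul, sub_zero]
  refine (Real.hasSum_pow_div_log_of_abs_lt_one hexp).congr_fun fun k ↦ ?_
  rw [← Real.exp_nat_mul, mul_comm (-δ), div_eq_inv_mul]
  push_cast
  rfl

theorem tendsto_one_sub_exp_neg_div :
    Tendsto (fun δ : ℝ ↦ (1 - Real.exp (-δ)) / δ) (𝓝[>] 0) (𝓝 1) := by
  have hderiv : HasDerivAt (fun δ : ℝ ↦ 1 - Real.exp (-δ)) 1 0 := by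
    simpa using! ((hasDerivAt_neg (0 : ℝ)).exp).const_sub 1
  refine hderiv.tendsto_slope_zero_right.congr fun δ ↦ ?_
  simp [div_eq_inv_mul]

theorem tendsto_mul_zeta_one_add :
    Tendsto (fun δ : ℝ ↦ δ * ∑' n : ℕ, 1 / (n : ℝ) ^ (1 + δ)) (𝓝[>] 0) (𝓝 1) := by
  have hshift : Tendsto (fun δ : ℝ ↦ 1 + δ) (𝓝[>] 0) (𝓝[>] 1) := by
    refine tendsto_nhdsWithin_iff.mpr ⟨?_, ?_⟩
    · exact tendsto_nhdsWithin_of_tendsto_nhds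
        (Continuous.tendsto' (by fun_prop) _ _ (add_zero 1))
    · filter_upwards [self_mem_nhdsWithin] with δ hδ
      exact lt_add_of_pos_right 1 (Set.mem_Ioi.mp hδ)
  simpa only [Function.comp_def, add_sub_cancel_left] using
    tendsto_sub_mul_tsum_nat_rpow.comp hshift

theorem tendsto_log_zeta_add_log_one_sub_exp_neg :
    Tendsto (fun δ : ℝ ↦ Real.log (∑' n : ℕ, 1 / (n : ℝ) ^ (1 + δ)) +
      Real.log (1 - Real.exp (-δ))) (𝓝[>] 0) (𝓝 0) := by
  have hlim := (tendsto_mul_zeta_one_add.mul tendsto_one_sub_exp_neg_div).log (by norm_num)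
  rw [one_mul, Real.log_one] at hlim
  refine hlim.congr' ?_
  filter_upwards [self_mem_nhdsWithin, tendsto_mul_zeta_one_add.eventually_ne one_ne_zero]
    with δ hδ hζ
  have hδ0 : δ ≠ 0 := ne_of_gt hδ
  have hexp : 1 - Real.exp (-δ) ≠ 0 :=
    (sub_pos.mpr (Real.exp_lt_one_iff.mpr (neg_neg_of_pos hδ))).ne'
  rw [← Real.log_mul (right_ne_zero_of_mul hζ) hexp]
  congr 1
  field_simp

theorem eq_eulerMascheroniConstant_of_tendsto_mertensSum {L : ℝ}
    (hL : Tendsto (fun x ↦ mertensSum x - Real.log (Real.log x)) atTop (𝓝 L)) :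
    L = Real.eulerMascheroniConstant := by
  have hlim : Tendsto (fun v ↦ mertensSum (Real.exp v) + -(harmonic ⌊v⌋₊ : ℝ)) atTop
      (𝓝 (L - Real.eulerMascheroniConstant)) := by
    refine ((hL.comp Real.tendsto_exp_atTop).sub tendsto_harmonic_floor_sub_log).congr fun v ↦ ?_
    simp only [Function.comp_apply, Real.log_exp]
    ring
  set c : ℕ ⊕ ℕ → ℝ := Sum.elim (fun n ↦ Λ n / (n * Real.log n)) (fun k ↦ -(k : ℝ)⁻¹)
  set τ : ℕ ⊕ ℕ → ℝ := Sum.elim (fun n ↦ Real.log n) (fun k ↦ (k : ℝ))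
  have hτ : ∀ i, 0 ≤ τ i := Sum.forall.mpr ⟨Real.log_natCast_nonneg, Nat.cast_nonneg⟩
  have hseries (δ : ℝ) (hδ : δ > 0) : HasSum (fun i ↦ c i * Real.exp (-δ * τ i))
      (Real.log (∑' n : ℕ, 1 / (n : ℝ) ^ (1 + δ)) + Real.log (1 - Real.exp (-δ))) := by
    have hharm := (hasSum_inv_mul_exp_neg hδ).neg
    simp only [neg_neg, ← neg_mul] at hharm
    exact HasSum.sum (hasSum_vonMangoldt_div_mul_log_mul_exp hδ) hharm
  have hsummatory (v : ℝ) : HasSum (fun i ↦ if τ i ≤ v then c i else 0)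
      (mertensSum (Real.exp v) + -(harmonic ⌊v⌋₊ : ℝ)) :=
    HasSum.sum (hasSum_ite_log_le_mertensSum v) (hasSum_ite_natCast_le_harmonic v)
  have habel := tendsto_of_hasSum_mul_exp_neg_mul hτ hseries hsummatory hlim
  exact sub_eq_zero.mp (tendsto_nhds_unique habel tendsto_log_zeta_add_log_one_sub_exp_neg)

end MertensConstant

theorem sum_vonMangoldt_div_log_general {x : ℝ} (hx : 1 < x) :
    IntegrableOn (fun t : ℝ ↦ Rfun t / (t * Real.log t ^ 2)) (Set.Ioi x) ∧
    ∑ n ∈ Finset.Icc 2 ⌊x⌋₊, Λ n / (n * Real.log n) =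
      Real.log (Real.log x) + Real.eulerMascheroniConstant + Rfun x / Real.log x -
        ∫ t in Set.Ioi x, Rfun t / (t * Real.log t ^ 2) := by
  refine ⟨integrableOn_Rfun_div hx, ?_⟩
  have hconst :=
    eq_eulerMascheroniConstant_of_tendsto_mertensSum (tendsto_mertensSum_sub_log_log hx)
  rw [← mertensSum]
  linarith

/-- For `x ≥ 2`, `∑_{n ≤ x} Λ(n)/(n log n) = log log x + γ + R(x)/log x
- ∫_x^∞ R(t)/(t (log t)^2) dt`, the improper integral converging absolutely. -/
theorem sum_vonMangoldt_div_log (x : ℝ) (hx : 2 ≤ x) :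
    MeasureTheory.IntegrableOn (fun t : ℝ => Rfun t / (t * (Real.log t) ^ 2))
      (Set.Ioi x) ∧
    ∑ n ∈ Finset.Icc 2 ⌊x⌋₊, ArithmeticFunction.vonMangoldt n / (n * Real.log n) =
      Real.log (Real.log x) + Real.eulerMascheroniConstant + Rfun x / Real.log x -
        ∫ t in Set.Ioi x, Rfun t / (t * (Real.log t) ^ 2) :=
  sum_vonMangoldt_div_log_general (by linarith)
end
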